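/- Suppose 0 < 1/n ≪ ε ≪ 1/t, 1/k with k, t ∈ ℕ∖{1}, 0 < η < 1, and a ∈ ℕ^{k−1}. Suppose P = P(k−1, a) is an (η, ε, a)-equitable family of partitions on a vertex set V with |V| = n. Suppose b ∈ [t]^{k−1} and a_i divides b_i for all i ∈ [k−1]. Then there exists a family of partitions Q = Q(k−1, b) on V which is (η, ε^{1/3}, b)-equitable and satisfies Q ≺ P. -/

import Mathlib

namespace HypReg

open Finset

attribute [local instance 10] Classical.propDecidable

noncomputable section

variable {V : Type*} [DecidableEq V]

/-- Representation of a 1-graph: the set of singletons of `U`. -/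
def sing (U : Finset V) : Finset (Finset V) :=
  U.image fun v => ({v} : Finset V)

/-- `Kset W j i B`: the i-element subsets of `W` all of whose j-element subsets lie in `B`. -/
def Kset (W : Finset V) (j i : ℕ) (B : Finset (Finset V)) : Finset (Finset V) :=
  (W.powersetCard i).filter fun S => ∀ T ∈ S.powersetCard j, T ∈ B

/-- Clique operator which, at level 1, uses the ambient family `cr` of crossing i-sets. -/
def KsetC (W : Finset V) (cr : Finset (Finset V)) (j i : ℕ) (B : Finset (Finset V)) :
    Finset (Finset V) :=
  if j = 1 then cr.filter fun S => ∀ v ∈ S, ({v} : Finset V) ∈ B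
  else Kset W j i B

/-- `A` (a (j+1)-graph) is (ε,d)-regular with respect to the j-graph `B` (plain clique sets). -/
def RegPair (W : Finset V) (j : ℕ) (ε d : ℝ) (A B : Finset (Finset V)) : Prop :=
  ∀ Q ⊆ B, ε * ((Kset W j (j+1) B).card : ℝ) ≤ ((Kset W j (j+1) Q).card : ℝ) →
    |((A ∩ Kset W j (j+1) Q).card : ℝ) - d * ((Kset W j (j+1) Q).card : ℝ)|
      ≤ ε * ((Kset W j (j+1) Q).card : ℝ)

/-- (ε,d)-regularity with crossing-aware clique sets. -/
def RegPairC (W : Finset V) (cr : Finset (Finset V)) (j : ℕ) (ε d : ℝ)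
    (A B : Finset (Finset V)) : Prop :=
  ∀ Q ⊆ B, ε * ((KsetC W cr j (j+1) B).card : ℝ) ≤ ((KsetC W cr j (j+1) Q).card : ℝ) →
    |((A ∩ KsetC W cr j (j+1) Q).card : ℝ) - d * ((KsetC W cr j (j+1) Q).card : ℝ)|
      ≤ ε * ((KsetC W cr j (j+1) Q).card : ℝ)

/-- Relative density `d(A | B)` of the (j+1)-graph `A` w.r.t. the j-graph `B`. -/
def dens (W : Finset V) (cr : Finset (Finset V)) (j : ℕ) (A B : Finset (Finset V)) : ℝ :=
  if (KsetC W cr j (j+1) B).card = 0 then 0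
  else ((A ∩ KsetC W cr j (j+1) B).card : ℝ) / ((KsetC W cr j (j+1) B).card : ℝ)

/-- `H` is a k-graph on the vertex set `W`. -/
def IsKGraph (W : Finset V) (k : ℕ) (H : Finset (Finset V)) : Prop :=
  ∀ e ∈ H, e ⊆ W ∧ e.card = k

/-- symmetric difference of two hypergraphs -/
def sd (A B : Finset (Finset V)) : Finset (Finset V) := (A \ B) ∪ (B \ A)

/-- A (candidate) family of partitions: the ground set, the class of each vertex and,
for each level `j ≥ 2`, the class of each crossing j-set. -/
structure PartFam (V : Type*) [DecidableEq V] where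
  gnd : Finset V
  vClass : V → Finset V
  cls : ℕ → Finset V → Finset (Finset V)

namespace PartFam

variable (F : PartFam V)

/-- crossing i-sets -/
def cross (i : ℕ) : Finset (Finset V) :=
  (F.gnd.powersetCard i).filter fun S =>
    ∀ u ∈ S, ∀ v ∈ S, u ≠ v → F.vClass u ≠ F.vClass v

/-- the level-j polyad of a vertex set `J` -/
def polyad (j : ℕ) (J : Finset V) : Finset (Finset V) :=
  if j = 1 then sing (J.sup F.vClass) else (J.powersetCard j).sup (F.cls j)

/-- the clique set `K_j(P̂^{(j-1)}(J))` of the (j−1)-polyad of a crossing j-set `J` -/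
def polyCliques (j : ℕ) (J : Finset V) : Finset (Finset V) :=
  KsetC F.gnd (F.cross j) (j-1) j (F.polyad (j-1) J)

/-- `F` is a family of partitions `P(k−1, a)`. -/
def IsFamily (k : ℕ) (a : ℕ → ℕ) : Prop :=
  (∀ v ∈ F.gnd, v ∈ F.vClass v) ∧
  (∀ v ∈ F.gnd, F.vClass v ⊆ F.gnd) ∧
  (∀ u ∈ F.gnd, ∀ v ∈ F.gnd, u ∈ F.vClass v → F.vClass u = F.vClass v) ∧
  (F.gnd.image F.vClass).card = a 1 ∧ k ≤ a 1 ∧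
  ∀ j, 2 ≤ j → j ≤ k - 1 →
    (∀ J ∈ F.cross j, J ∈ F.cls j J) ∧
    (∀ J ∈ F.cross j, ∀ I ∈ F.cls j J, F.cls j I = F.cls j J) ∧
    (∀ J ∈ F.cross j, F.cls j J ⊆ F.polyCliques j J) ∧
    (∀ J ∈ F.cross j, F.polyCliques j J ⊆ F.cross j) ∧
    (∀ J ∈ F.cross j, ((F.polyCliques j J).image (F.cls j)).card = a j)

/-- the regularity condition in the definition of an equitable family of partitions:
all polyad complexes of crossing k-sets are (ε, (1/a_2, …, 1/a_{k−1}))-regular. -/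
def PolyadReg (k : ℕ) (a : ℕ → ℕ) (ε : ℝ) : Prop :=
  ∀ K ∈ F.cross k, ∀ j, 2 ≤ j → j ≤ k - 1 → ∀ J ∈ K.powersetCard j,
    RegPairC F.gnd (F.cross j) (j-1) ε (1 / (a j : ℝ)) (F.polyad j K) (F.polyad (j-1) J)

/-- `(η, ε, a, λ)`-equitable family of partitions -/
def IsEquitable (k : ℕ) (a : ℕ → ℕ) (η ε lam : ℝ) : Prop :=
  1 ≤ η * (a 1 : ℝ) ∧
  (∀ v ∈ F.gnd, |((F.vClass v).card : ℝ) - (F.gnd.card : ℝ) / (a 1 : ℝ)|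
      ≤ lam * (F.gnd.card : ℝ) / (a 1 : ℝ)) ∧
  F.PolyadReg k a ε

/-- `(η, ε, a)`-equitable family of partitions (classes of size ⌊n/a₁⌋ or ⌊n/a₁⌋+1) -/
def IsEquitableE (k : ℕ) (a : ℕ → ℕ) (η ε : ℝ) : Prop :=
  1 ≤ η * (a 1 : ℝ) ∧
  (∀ v ∈ F.gnd, (F.vClass v).card = F.gnd.card / a 1 ∨
      (F.vClass v).card = F.gnd.card / a 1 + 1) ∧
  F.PolyadReg k a ε

/-- `G` is perfectly ε-regular with respect to `F`. -/
def PerfectlyRegular (k : ℕ) (ε : ℝ) (G : Finset (Finset V)) : Prop :=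
  ∀ K ∈ F.cross k, ∃ d : ℝ, 0 ≤ d ∧
    RegPairC F.gnd (F.cross k) (k-1) ε d G (F.polyad (k-1) K)

end PartFam

/-- `a` is a T-bounded vector of length k−1. -/
def BoundedVec (k T : ℕ) (a : ℕ → ℕ) : Prop := ∀ j, 1 ≤ j → j ≤ k - 1 → a j ≤ T

/-- level-j refinement `F^{(j)} ≺ P^{(j)}` between two families of partitions -/
def RefinesAt (F P : PartFam V) (j : ℕ) : Prop :=
  if j = 1 then ∀ v ∈ F.gnd, F.vClass v ⊆ P.vClass v
  else ∀ I ∈ F.cross j,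
    (∃ J ∈ P.cross j, F.cls j I ⊆ P.cls j J) ∨ ∀ S ∈ F.cls j I, S ∉ P.cross j

/-- level-j approximate refinement `F^{(j)} ≺_ν P^{(j)}` -/
def RefinesApproxAt (F P : PartFam V) (j : ℕ) (ν : ℝ) : Prop :=
  if j = 1 then
    ∃ f : Finset V → Finset V,
      (∀ v ∈ F.gnd, f (F.vClass v) ∈ F.gnd.image P.vClass) ∧
      ∑ C ∈ F.gnd.image F.vClass, ((C \ f C).card : ℝ) ≤ ν * (F.gnd.card : ℝ)
  else
    ∃ f : Finset (Finset V) → Finset (Finset V),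
      (∀ I ∈ F.cross j,
        f (F.cls j I) ∈ ((P.cross j).image (P.cls j)) ∪ {F.cross j \ P.cross j}) ∧
      ∑ C ∈ (F.cross j).image (F.cls j), ((C \ f C).card : ℝ) ≤ ν * ((F.cross j).card : ℝ)

/-- The address space: a base set (of class indices) together with a labelling of its subsets. -/
abbrev Addr := Finset ℕ × (Finset ℕ → ℕ)

/-- `x` is an element of the address space `Â(l, j, a)`. -/
def IsAddress (l j : ℕ) (a : ℕ → ℕ) (x : Addr) : Prop :=
  x.1.card = l ∧ (∀ i ∈ x.1, 1 ≤ i ∧ i ≤ a 1) ∧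
  (∀ L : Finset ℕ, L ⊆ x.1 → 2 ≤ L.card → L.card ≤ j → 1 ≤ x.2 L ∧ x.2 L ≤ a L.card) ∧
  (∀ L : Finset ℕ, ¬(L ⊆ x.1 ∧ 2 ≤ L.card ∧ L.card ≤ j) → x.2 L = 0)

/-- restriction `ŷ ≤ x̂` of an address to the base `B`, keeping levels up to `j`. -/
def restrictA (x : Addr) (j : ℕ) (B : Finset ℕ) : Addr :=
  (B, fun L => if L ⊆ B ∧ 2 ≤ L.card ∧ L.card ≤ j then x.2 L else 0)

/-- `d` is a density function of `Â(k, k−1, a)`. -/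
def DensityFun (k : ℕ) (a : ℕ → ℕ) (d : Addr → ℝ) : Prop :=
  ∀ x : Addr, IsAddress k (k-1) a x → 0 ≤ d x ∧ d x ≤ 1

/-- A family of partitions together with an `a`-labelling. -/
structure LabFam (V : Type*) [DecidableEq V] extends PartFam V where
  vIdx : V → ℕ
  lbl : ℕ → Finset V → ℕ

namespace LabFam

variable (F : LabFam V)

/-- `F` is a family of partitions with a legitimate `a`-labelling. -/
def IsLabeled (k : ℕ) (a : ℕ → ℕ) : Prop :=
  F.toPartFam.IsFamily k a ∧
  (∀ v ∈ F.gnd, 1 ≤ F.vIdx v ∧ F.vIdx v ≤ a 1) ∧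
  (∀ u ∈ F.gnd, ∀ v ∈ F.gnd, (F.vIdx u = F.vIdx v ↔ F.vClass u = F.vClass v)) ∧
  ∀ j, 2 ≤ j → j ≤ k - 1 →
    (∀ I ∈ F.toPartFam.cross j, 1 ≤ F.lbl j I ∧ F.lbl j I ≤ a j) ∧
    (∀ I ∈ F.toPartFam.cross j, ∀ I' ∈ F.cls j I, F.lbl j I' = F.lbl j I) ∧
    (∀ I ∈ F.toPartFam.cross j, ∀ I' ∈ F.toPartFam.cross j,
      F.toPartFam.polyad (j-1) I = F.toPartFam.polyad (j-1) I' →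
      F.lbl j I = F.lbl j I' → F.cls j I = F.cls j I')

/-- the address `x̂(L)` (up to level j) of a crossing set `L` -/
def addrOf (j : ℕ) (L : Finset V) : Addr :=
  (L.image F.vIdx,
   fun M => if M ⊆ L.image F.vIdx ∧ 2 ≤ M.card ∧ M.card ≤ j
     then F.lbl M.card (L.filter fun v => F.vIdx v ∈ M) else 0)

/-- the part `P^{(j)}(x̂, b)` -/
def partAt (j : ℕ) (x : Addr) (b : ℕ) : Finset (Finset V) :=
  if j ≤ 1 then (if x.1 = {b} then sing (F.gnd.filter fun v => F.vIdx v = b) else ∅)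
  else (F.toPartFam.cross j).filter fun I => F.addrOf (j-1) I = x ∧ F.lbl j I = b

/-- the polyad `P̂^{(j)}(x̂)` -/
def polyAt (j : ℕ) (x : Addr) : Finset (Finset V) :=
  if j = 1 then sing (F.gnd.filter fun v => F.vIdx v ∈ x.1)
  else (x.1.powersetCard j).sup fun B => F.partAt j (restrictA x (j-1) B) (x.2 B)

/-- `F` is an `(ε, d)`-partition of `H`. -/
def IsDensPartition (k : ℕ) (a : ℕ → ℕ) (ε : ℝ) (d : Addr → ℝ)
    (H : Finset (Finset V)) : Prop :=
  ∀ x : Addr, IsAddress k (k-1) a x →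
    RegPairC F.gnd (F.toPartFam.cross k) (k-1) ε (d x) H (F.polyAt (k-1) x)

/-- `F` is an `(ε, a, d)`-equitable partition of `H`. -/
def IsEquitPartition (k : ℕ) (a : ℕ → ℕ) (ε : ℝ) (d : Addr → ℝ)
    (H : Finset (Finset V)) : Prop :=
  F.IsLabeled k a ∧ F.toPartFam.IsEquitableE k a (1 / (a 1 : ℝ)) ε ∧
  F.IsDensPartition k a ε d H

end LabFam

/-- An ℓ-partite complex: vertex classes and, for each level, a partite graph. -/
structure Cx (V : Type*) [DecidableEq V] (l : ℕ) where
  C : Fin l → Finset V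
  G : ℕ → Finset (Finset V)

namespace Cx

variable {l : ℕ} (X : Cx V l)

def gnd : Finset V := Finset.univ.sup X.C

/-- crossing i-sets with respect to the classes of `X` -/
def cross (i : ℕ) : Finset (Finset V) :=
  (X.gnd.powersetCard i).filter fun S => ∀ t : Fin l, (S ∩ X.C t).card ≤ 1

/-- restriction of the level-j graph to the classes indexed by `L` -/
def restr (j : ℕ) (L : Finset (Fin l)) : Finset (Finset V) :=
  if j = 1 then sing (L.sup X.C) else (X.G j).filter fun e => e ⊆ L.sup X.C

/-- `X` is a complex with levels up to `k`. -/
def IsComplex (k : ℕ) : Prop :=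
  (∀ s t : Fin l, s ≠ t → Disjoint (X.C s) (X.C t)) ∧
  (∀ j, 2 ≤ j → j ≤ k → X.G j ⊆ X.cross j) ∧
  (∀ j, 3 ≤ j → j ≤ k → X.G j ⊆ Kset X.gnd (j-1) j (X.G (j-1)))

/-- `X` is an (ε, (d_2, …, d_k))-regular complex. -/
def IsRegular (k : ℕ) (ε : ℝ) (d : ℕ → ℝ) : Prop :=
  ∀ j, 2 ≤ j → j ≤ k → ∀ L ∈ (Finset.univ : Finset (Fin l)).powersetCard j,
    RegPairC X.gnd (X.cross j) (j-1) ε (d j) (X.G j) (X.restr (j-1) L)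

/-- The restricted complex `X[L]` is (ε, (d_2, …, d_{k−1}, p))-regular. -/
def RestrRegular (k : ℕ) (ε : ℝ) (d : ℕ → ℝ) (L : Finset (Fin l)) (p : ℝ) : Prop :=
  ∀ j, 2 ≤ j → j ≤ k → ∀ L' ∈ L.powersetCard j,
    RegPairC X.gnd (X.cross j) (j-1) ε (if j = k then p else d j)
      (X.restr j L) (X.restr (j-1) L')

/-- clique set `K_i` of the level-j graph of the complex (level 1: crossing sets). -/
def KsetLvl (j i : ℕ) : Finset (Finset V) :=
  if j ≤ 1 then X.cross i else Kset X.gnd j i (X.G j)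

end Cx

/-- `eCL`, `mCL` satisfy the counting lemma of Kohayakawa–Rödl–Skokan. -/
def CountingProp (eCL : ℝ → ℝ → ℕ → ℕ → ℝ) (mCL : ℝ → ℝ → ℕ → ℕ → ℕ) : Prop :=
  ∀ γ d₀ : ℝ, 0 < γ → 0 < d₀ → ∀ k l : ℕ, 2 ≤ k → k ≤ l →
    (0 < eCL γ d₀ k l ∧ eCL γ d₀ k l ≤ 1) ∧
    ∀ (V₀ : Type) [DecidableEq V₀], ∀ (X : Cx V₀ l) (m : ℕ) (lam ε : ℝ) (d : ℕ → ℝ),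
      0 ≤ lam → lam < 1/4 → 0 < ε → ε ≤ eCL γ d₀ k l → mCL γ d₀ k l ≤ m →
      (∀ j, 2 ≤ j → j ≤ k → d₀ ≤ d j) →
      X.IsComplex k →
      (∀ i, |((X.C i).card : ℝ) - (m : ℝ)| ≤ lam * m) →
      X.IsRegular k ε d →
      |((Kset X.gnd k l (X.G k)).card : ℝ) -
        (∏ j ∈ Finset.Icc 2 k, d j ^ (l.choose j)) * ∏ i, ((X.C i).card : ℝ)|
        ≤ γ * ((∏ j ∈ Finset.Icc 2 k, d j ^ (l.choose j)) * ∏ i, ((X.C i).card : ℝ))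

/-- `eRI` is a legitimate function for defining regularity instances. -/
def GoodERI (eRI : ℕ → ℕ → ℝ) : Prop :=
  (∀ t k : ℕ, 1 ≤ t → 2 ≤ k → 0 < eRI t k ∧ eRI t k ≤ 1) ∧
  (∀ k t t' : ℕ, 1 ≤ t → t ≤ t' → eRI t' k ≤ eRI t k) ∧
  (∀ t k k' : ℕ, 2 ≤ k → k ≤ k' → eRI t k' ≤ eRI t k) ∧
  (∀ k : ℕ, Filter.Tendsto (fun t => eRI t k) Filter.atTop (nhds 0)) ∧
  ∃ (eCL : ℝ → ℝ → ℕ → ℕ → ℝ) (mCL : ℝ → ℝ → ℕ → ℕ → ℕ),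
    CountingProp eCL mCL ∧
    ∀ t k : ℕ, 1 ≤ t → 2 ≤ k →
      eRI t k < eCL (1/(t:ℝ)) (1/(t:ℝ)) (k-1) k / (4 * (t:ℝ) ^ (4^k))

/-- `max_i a_i` over `i ∈ [k−1]` -/
def maxA (k : ℕ) (a : ℕ → ℕ) : ℕ := (Finset.Icc 1 (k-1)).sup a

/-- `(ε, a, d)` is a regularity instance. -/
def RegInstance (eRI : ℕ → ℕ → ℝ) (k : ℕ) (ε : ℝ) (a : ℕ → ℕ) (d : Addr → ℝ) : Prop :=
  2 ≤ k ∧ (∀ j, 1 ≤ j → j ≤ k - 1 → 1 ≤ a j) ∧ 0 < ε ∧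
  ε ≤ eRI (maxA k a) k ∧ DensityFun k a d

section Counting

variable {W : Type} [Fintype W] [DecidableEq W]

/-- `S` spans an induced copy of `Fg` in `H` (both k-graphs). -/
def InducedCopy (Fg : Finset (Finset W)) (H : Finset (Finset V)) (k : ℕ) (S : Finset V) :
    Prop :=
  ∃ e : W → V, Function.Injective e ∧ Finset.univ.image e = S ∧
    ∀ A : Finset W, A.card = k → (A.image e ∈ H ↔ A ∈ Fg)

/-- the size of the automorphism group of `Fg` -/
def AutCount (Fg : Finset (Finset W)) : ℕ :=
  Nat.card {π : W ≃ W // ∀ A : Finset W, A.image π ∈ Fg ↔ A ∈ Fg}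

/-- the number `IC_σ(F, H)` of σ-induced copies of `Fg` in the complex `X` -/
def ICosig {l : ℕ} (X : Cx V l) (k : ℕ) (Fg : Finset (Finset W)) (σ : W ≃ Fin l) : ℕ :=
  Set.ncard {e : W → V |
    (∀ v, e v ∈ X.C (σ v)) ∧
    Finset.univ.image e ∈ X.KsetLvl (k-1) l ∧
    ∀ A : Finset W, A.card = k → (A.image e ∈ X.G k ↔ A ∈ Fg)}

/-- `IC(F, d, x̂, σ)` -/
def ICs (Fg : Finset (Finset W)) (k l : ℕ) (a : ℕ → ℕ) (d : Addr → ℝ)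
    (x : Addr) (σ : W → ℕ) : ℝ :=
  (∏ B ∈ x.1.powersetCard k,
    if ∃ A ∈ Fg, A.image σ = B then d (restrictA x (k-1) B)
    else 1 - d (restrictA x (k-1) B)) *
  ∏ j ∈ Finset.Icc 2 (k-1), ((a j : ℝ) ^ (l.choose j))⁻¹

/-- `IC(F, d, x̂)` -/
def ICa (Fg : Finset (Finset W)) (k l : ℕ) (a : ℕ → ℕ) (d : Addr → ℝ) (x : Addr) : ℝ :=
  (AutCount Fg : ℝ)⁻¹ *
    ∑ᶠ σ ∈ {σ : W → ℕ | Set.BijOn σ Set.univ ↑x.1}, ICs Fg k l a d x σ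

/-- `IC(F, d)` -/
def IC (Fg : Finset (Finset W)) (k l : ℕ) (a : ℕ → ℕ) (d : Addr → ℝ) : ℝ :=
  (((a 1).choose l : ℝ))⁻¹ * ∑ᶠ x ∈ {x : Addr | IsAddress l (k-1) a x}, ICa Fg k l a d x

end Counting

end

end HypReg

namespace HypReg

open Finset

/-!
Split every vertex class of `P` into `b 1 / a 1` classes of nearly equal size, and give every
`j`-set a label: a `P`-crossing `j`-set is labelled by the index of its `P`-class together with one
of `b j / a j` colours, any other `j`-set with one of `b j` colours. The vertex colours and the
labels of all subsets determine the classes of `Q`. The colours can be chosen so that every label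
occurs in almost the expected proportion inside every clique set of a `(j - 1)`-graph: there are
only `2 ^ O(n ^ (j - 1))` such clique sets, while the exponential moments of a random colouring make
each of them fail with probability `2 ^ (-Ω(n ^ j))`. Regularity says the same of the classes of
`P`, so each label class splits all clique sets evenly up to an error `2 * ε * n ^ j`. This also
bounds the number of cliques of every polyad of `Q` from below by `c * n ^ j`, with `c` depending on
`k` and `t` only, and hence the error is small relative to every clique set that has to be tested
for `ε ^ (1 / 3)`-regularity.
-/

section EvenColorings

variable {α ι κ : Type*}

theorem sum_exp_le_of_sum_eq_zero {C : Finset κ} {w : κ → ℝ} {l : ℝ} (hl : l ≤ 1)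
    (h0 : ∑ r ∈ C, w r = 0) (hw : ∀ r ∈ C, |w r| ≤ l) :
    ∑ r ∈ C, Real.exp (w r) ≤ #C * Real.exp (l ^ 2) := by
  have hexp : ∀ r ∈ C, Real.exp (w r) ≤ (1 + l ^ 2) + w r := fun r hr => by
    have h1 := (abs_le.1 (Real.abs_exp_sub_one_sub_id_le ((hw r hr).trans hl))).2
    have h2 : w r ^ 2 ≤ l ^ 2 := sq_le_sq.2 ((hw r hr).trans (le_abs_self l))
    linarith
  calc ∑ r ∈ C, Real.exp (w r) ≤ ∑ r ∈ C, ((1 + l ^ 2) + w r) := sum_le_sum hexp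
    _ = #C * (1 + l ^ 2) := by rw [sum_add_distrib, h0, sum_const, nsmul_eq_mul, add_zero]
    _ ≤ #C * Real.exp (l ^ 2) := by gcongr; linarith [Real.add_one_le_exp (l ^ 2)]

/- The method of conditional expectations: points are coloured one at a time, and some colour
does not exceed the average over all colours. -/
theorem exists_coloring_sum_exp_le {C : Finset κ} (hC : C.Nonempty) {I : Finset ι}
    {w : ι → α → κ → ℝ} {l : ℝ} (hl : l ≤ 1) (h0 : ∀ i ∈ I, ∀ x, ∑ r ∈ C, w i x r = 0)
    (hw : ∀ i ∈ I, ∀ x, ∀ r ∈ C, |w i x r| ≤ l) (H : Finset α) :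
    ∃ χ : α → κ, (∀ x, χ x ∈ C) ∧
      ∑ i ∈ I, Real.exp (∑ x ∈ H, w i x (χ x)) ≤ #I * Real.exp (l ^ 2 * #H) := by
  classical
  induction H using Finset.induction_on with
  | empty => exact ⟨fun _ => hC.choose, fun _ => hC.choose_spec, by simp⟩
  | insert x H hx ih =>
    obtain ⟨χ, hχ, hsum⟩ := ih
    have average : ∑ r ∈ C, ∑ i ∈ I, Real.exp (w i x r + ∑ y ∈ H, w i y (χ y)) ≤
        ∑ r ∈ C, #I * Real.exp (l ^ 2 * #(insert x H)) :=
      calc ∑ r ∈ C, ∑ i ∈ I, Real.exp (w i x r + ∑ y ∈ H, w i y (χ y))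
          = ∑ i ∈ I, (∑ r ∈ C, Real.exp (w i x r)) * Real.exp (∑ y ∈ H, w i y (χ y)) := by
            rw [sum_comm]; simp_rw [Real.exp_add, sum_mul]
        _ ≤ ∑ i ∈ I, (#C * Real.exp (l ^ 2)) * Real.exp (∑ y ∈ H, w i y (χ y)) := by
            gcongr with i hi
            exact sum_exp_le_of_sum_eq_zero hl (h0 i hi x) (hw i hi x)
        _ = (#C * Real.exp (l ^ 2)) * ∑ i ∈ I, Real.exp (∑ y ∈ H, w i y (χ y)) := by
            rw [mul_sum]
        _ ≤ (#C * Real.exp (l ^ 2)) * (#I * Real.exp (l ^ 2 * #H)) := by gcongr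
        _ = ∑ r ∈ C, #I * Real.exp (l ^ 2 * #(insert x H)) := by
            rw [sum_const, nsmul_eq_mul, card_insert_of_notMem hx, Nat.cast_succ, mul_add,
              Real.exp_add, mul_one]
            ring
    obtain ⟨r, hr, hle⟩ := exists_le_of_sum_le hC average
    refine ⟨Function.update χ x r, fun y => ?_, hle.trans' (le_of_eq ?_)⟩
    · obtain rfl | hy := eq_or_ne y x
      · rwa [Function.update_self]
      · rw [Function.update_of_ne hy]; exact hχ y
    · refine sum_congr rfl fun i _ => ?_
      rw [sum_insert hx, Function.update_self]
      congr 2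
      exact sum_congr rfl fun y hy => by rw [Function.update_of_ne (ne_of_mem_of_not_mem hy hx)]

theorem exists_coloring_abs_sum_le {C : Finset κ} (hC : C.Nonempty) {I : Finset ι}
    {w : ι → α → κ → ℝ} (h0 : ∀ i ∈ I, ∀ x, ∑ r ∈ C, w i x r = 0)
    (hw : ∀ i ∈ I, ∀ x, ∀ r ∈ C, |w i x r| ≤ 1) (H : Finset α) {l : ℝ} (hl0 : 0 < l)
    (hl : l ≤ 1) :
    ∃ χ : α → κ, (∀ x, χ x ∈ C) ∧
      ∀ i ∈ I, |∑ x ∈ H, w i x (χ x)| ≤ Real.log (2 * #I) / l + l * #H := by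
  have hsign : ∀ s ∈ ({l, -l} : Finset ℝ), |s| = l := by simp [abs_of_pos hl0]
  obtain ⟨χ, hχ, hsum⟩ := exists_coloring_sum_exp_le (I := I ×ˢ {l, -l})
    (w := fun i x r => i.2 * w i.1 x r) hC hl
    (fun i hi x => by rw [← mul_sum, h0 _ (mem_product.1 hi).1, mul_zero])
    (fun i hi x r hr => by
      rw [abs_mul, hsign _ (mem_product.1 hi).2]
      exact mul_le_of_le_one_right hl0.le (hw _ (mem_product.1 hi).1 x r hr)) H
  refine ⟨χ, hχ, fun i hi => ?_⟩
  have hI : (0 : ℝ) < 2 * #I := by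
    have := card_pos.2 ⟨i, hi⟩
    positivity
  have hbound : ∀ s ∈ ({l, -l} : Finset ℝ),
      s * ∑ x ∈ H, w i x (χ x) ≤ Real.log (2 * #I) + l ^ 2 * #H := fun s hs => by
    rw [← Real.exp_le_exp, Real.exp_add, Real.exp_log hI, mul_sum]
    calc Real.exp (∑ x ∈ H, s * w i x (χ x))
        ≤ ∑ i ∈ I ×ˢ {l, -l}, Real.exp (∑ x ∈ H, i.2 * w i.1 x (χ x)) :=
          single_le_sum (f := fun i : ι × ℝ => Real.exp (∑ x ∈ H, i.2 * w i.1 x (χ x)))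
            (fun _ _ => (Real.exp_pos _).le) (mk_mem_product hi hs)
      _ ≤ 2 * #I * Real.exp (l ^ 2 * #H) := by
          rw [card_product, card_pair (self_ne_neg.2 hl0.ne')] at hsum
          push_cast at hsum
          linarith
  have hpos := hbound l (by simp)
  have hneg := hbound (-l) (by simp)
  rw [← mul_le_mul_iff_right₀ hl0, ← abs_of_pos hl0, ← abs_mul, abs_of_pos hl0]
  refine (abs_le'.2 ⟨hpos, by linarith⟩).trans_eq ?_
  field_simp

variable {m c : ℕ} {E H : Finset α}

/-- For `x ∈ E`, the deviation of the indicator of the event that `x` has colour `c` from its mean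
over `m` colours, as a function of the colour `r` of `x`. -/
noncomputable def colorDeviation [DecidableEq α] (m : ℕ) (E : Finset α) (c : ℕ) (x : α)
    (r : ℕ) : ℝ :=
  if x ∈ E then (if r = c then 1 else 0) - 1 / m else 0

theorem sum_colorDeviation [DecidableEq α] (hc : c < m) (x : α) :
    ∑ r ∈ range m, colorDeviation m E c x r = 0 := by
  have hm : (m : ℝ) ≠ 0 := Nat.cast_ne_zero.2 (by lia)
  by_cases hx : x ∈ E <;> simp [colorDeviation, hx, hc, hm]

theorem abs_colorDeviation_le_one [DecidableEq α] (x : α) (r : ℕ) :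
    |colorDeviation m E c x r| ≤ 1 := by
  have h0 : (0 : ℝ) ≤ 1 / m := by positivity
  have h1 : (1 : ℝ) / m ≤ 1 := by rw [one_div]; exact Nat.cast_inv_le_one m
  unfold colorDeviation
  split_ifs <;> rw [abs_le] <;> constructor <;> linarith

theorem sum_colorDeviation_comp [DecidableEq α] (hE : E ⊆ H) (χ : α → ℕ) :
    ∑ x ∈ H, colorDeviation m E c x (χ x) = #{x ∈ E | χ x = c} - #E / m := by
  simp only [colorDeviation]
  rw [← sum_filter, filter_mem_eq_inter, inter_eq_right.2 hE, sum_sub_distrib]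
  simp [div_eq_mul_inv]

theorem exists_balanced_coloring (hm : 0 < m) {𝓔 : Finset (Finset α)} (h𝓔 : ∀ E ∈ 𝓔, E ⊆ H)
    {l : ℝ} (hl0 : 0 < l) (hl : l ≤ 1) :
    ∃ χ : α → ℕ, (∀ x, χ x < m) ∧ ∀ E ∈ 𝓔, ∀ c < m,
      |(#{x ∈ E | χ x = c} : ℝ) - #E / m| ≤ Real.log (2 * (#𝓔 * m)) / l + l * #H := by
  classical
  obtain ⟨χ, hχ, hsum⟩ := exists_coloring_abs_sum_le (nonempty_range_iff.2 hm.ne')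
    (I := 𝓔 ×ˢ range m) (w := fun i => colorDeviation m i.1 i.2)
    (fun i hi => sum_colorDeviation (mem_range.1 (mem_product.1 hi).2))
    (fun i _ x r _ => abs_colorDeviation_le_one x r) H hl0 hl
  refine ⟨χ, fun x => mem_range.1 (hχ x), fun E hE c hc => ?_⟩
  have := hsum (E, c) (mem_product.2 ⟨hE, mem_range.2 hc⟩)
  rwa [sum_colorDeviation_comp (h𝓔 E hE), card_product, card_range, Nat.cast_mul] at this

end EvenColorings

section Equipartitions

variable {α β : Type*}

theorem exists_bijOn_range_card (s : Finset β) : ∃ e : β → ℕ, Set.BijOn e s (range #s) := by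
  refine s.finite_toSet.exists_bijOn_of_encard_eq ?_
  simp only [Set.encard_coe_eq_coe_finsetCard, card_range]

theorem mul_add_eq_iff_div_mod {m x r c : ℕ} (hr : r < m) :
    m * x + r = c ↔ x = c / m ∧ r = c % m := by
  rw [eq_comm (a := x), eq_comm (a := r), Nat.div_mod_unique (by lia), and_iff_left hr, add_comm]

theorem mul_add_lt_mul {m x r d : ℕ} (hr : r < m) (hx : x < d) : m * x + r < d * m := by
  calc m * x + r < m * (x + 1) := by rw [mul_add_one]; gcongr
    _ ≤ d * m := by rw [mul_comm]; gcongr; exact hx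

theorem exists_coloring_card_filter_eq (s : Finset β) {m : ℕ} (hm : 0 < m) :
    ∃ χ : β → ℕ, (∀ x, χ x < m) ∧
      ∀ r < m, #{x ∈ s | χ x = r} = #s / m + if r < #s % m then 1 else 0 := by
  obtain ⟨e, he⟩ := exists_bijOn_range_card s
  refine ⟨fun x => e x % m, fun x => Nat.mod_lt _ hm, fun r hr => ?_⟩
  have hcount := Nat.count_modEq_card #s hm r
  simp only [Nat.mod_eq_of_lt hr, Nat.count_eq_card_filter_range, Nat.ModEq] at hcount
  rw [← hcount]
  refine card_nbij e (fun x hx => ?_) (he.injOn.mono (filter_subset _ _)) fun i hi => ?_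
  · exact mem_filter.2 ⟨he.mapsTo (mem_filter.1 hx).1, (mem_filter.1 hx).2⟩
  · obtain ⟨x, hx, rfl⟩ := he.surjOn (mem_filter.1 hi).1
    exact ⟨x, mem_filter.2 ⟨hx, (mem_filter.1 hi).2⟩, rfl⟩

theorem div_add_ite_eq_or {N q m r : ℕ} (hN : N = q ∨ N = q + 1) :
    (N / m + if r < N % m then 1 else 0) = q / m ∨
      (N / m + if r < N % m then 1 else 0) = q / m + 1 := by
  obtain rfl | rfl := hN
  · split_ifs <;> simp
  · rw [Nat.succ_div]
    by_cases hd : m ∣ q + 1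
    · simp [hd, Nat.mod_eq_zero_of_dvd hd]
    · split_ifs <;> simp

/-- A colouring of `W` by `0, …, m - 1` with colour classes as equal in size as possible. -/
structure IsEquitableColoring (W : Finset α) (f : α → ℕ) (m : ℕ) : Prop where
  lt : ∀ v ∈ W, f v < m
  card_eq : ∀ c < m, #{u ∈ W | f u = c} = #W / m ∨ #{u ∈ W | f u = c} = #W / m + 1

namespace IsEquitableColoring

variable {W : Finset α} {f : α → ℕ} {m : ℕ}

theorem div_le_card (h : IsEquitableColoring W f m) {c : ℕ} (hc : c < m) :
    #W / m ≤ #{u ∈ W | f u = c} := by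
  have := h.card_eq c hc
  lia

theorem card_image (h : IsEquitableColoring W f m) (hm : m ≤ #W) : #(W.image f) = m := by
  suffices W.image f = range m by rw [this, card_range]
  refine (image_subset_iff.2 fun v hv => mem_range.2 (h.lt v hv)).antisymm fun c hc => ?_
  have hc := mem_range.1 hc
  obtain ⟨v, hv⟩ := card_pos.1 ((Nat.div_pos hm (Nat.zero_lt_of_lt hc)).trans_le (h.div_le_card hc))
  exact mem_image.2 ⟨v, mem_filter.1 hv⟩

end IsEquitableColoring

theorem exists_equitable_refinement [DecidableEq β] {W : Finset α} {f : α → β} {a b : ℕ}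
    (hab : a ∣ b) (hb : 0 < b) (hf : #(W.image f) = a)
    (hW : ∀ v ∈ W, #{u ∈ W | f u = f v} = #W / a ∨ #{u ∈ W | f u = f v} = #W / a + 1) :
    ∃ g : α → ℕ, IsEquitableColoring W g b ∧ ∀ u ∈ W, ∀ v ∈ W, g u = g v → f u = f v := by
  obtain ⟨m, rfl⟩ := hab
  have hm : 0 < m := Nat.pos_of_mul_pos_left hb
  obtain ⟨e, he⟩ := exists_bijOn_range_card (W.image f)
  rw [hf] at he
  have hfe : ∀ u ∈ W, ∀ v ∈ W, e (f u) = e (f v) → f u = f v := fun u hu v hv =>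
    he.injOn (mem_image_of_mem f hu) (mem_image_of_mem f hv)
  choose χ hχ hcard using fun y => exists_coloring_card_filter_eq {u ∈ W | f u = y} hm
  refine ⟨fun v => m * e (f v) + χ (f v) v, ⟨fun v hv => ?_, fun c hc => ?_⟩,
    fun u hu v hv huv => ?_⟩
  · exact mul_add_lt_mul (hχ _ _) (mem_range.1 (he.mapsTo (mem_image_of_mem f hv)))
  · have hca : c / m ∈ range a := mem_range.2 ((Nat.div_lt_iff_lt_mul hm).2 hc)
    obtain ⟨_, hy, hyc⟩ := he.surjOn hca
    obtain ⟨v, hv, rfl⟩ := mem_image.1 hy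
    have hclass : {u ∈ W | m * e (f u) + χ (f u) u = c} =
        {x ∈ {u ∈ W | f u = f v} | χ (f v) x = c % m} := by
      ext u
      simp only [mem_filter, and_assoc, mul_add_eq_iff_div_mod (hχ _ _), ← hyc]
      refine and_congr_right fun hu => ?_
      constructor
      · rintro ⟨h1, h2⟩
        have huv := hfe u hu v hv h1
        exact ⟨huv, huv ▸ h2⟩
      · rintro ⟨h1, h2⟩
        rw [h1]
        exact ⟨rfl, h2⟩
    rw [hclass, hcard _ _ (Nat.mod_lt _ hm), ← Nat.div_div_eq_div_mul]
    exact div_add_ite_eq_or (hW v hv)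
  · rw [mul_add_eq_iff_div_mod (hχ _ _)] at huv
    exact hfe u hu v hv (huv.1.trans ((mul_add_eq_iff_div_mod (hχ _ _)).1 rfl).1.symm)

end Equipartitions

section CliqueSets

variable {V : Type*} [DecidableEq V] {𝓢 𝓣 H A B R R₀ : Finset (Finset V)} {S : Finset V}
  {i j m m' : ℕ} {e e' : ℝ}

/-- The set `K_j` of cliques of an `i`-graph `R`, relative to an ambient family `𝓢` of `j`-sets:
the members of `𝓢` all of whose `i`-subsets are edges of `R`. -/
def cliqueSets (𝓢 : Finset (Finset V)) (i : ℕ) (R : Finset (Finset V)) : Finset (Finset V) :=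
  {S ∈ 𝓢 | ∀ T ∈ S.powersetCard i, T ∈ R}

theorem mem_cliqueSets : S ∈ cliqueSets 𝓢 i R ↔ S ∈ 𝓢 ∧ ∀ T ∈ S.powersetCard i, T ∈ R :=
  mem_filter

theorem cliqueSets_subset : cliqueSets 𝓢 i R ⊆ 𝓢 :=
  filter_subset _ _

theorem cliqueSets_mono_left (h : 𝓢 ⊆ 𝓣) : cliqueSets 𝓢 i R ⊆ cliqueSets 𝓣 i R :=
  filter_subset_filter _ h

theorem cliqueSets_cliqueSets : cliqueSets (cliqueSets 𝓢 i R₀) i R = cliqueSets 𝓢 i (R₀ ∩ R) := by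
  ext S
  simp only [mem_cliqueSets, mem_inter, forall₂_and, and_assoc]

theorem cliqueSets_inter_powersetCard {W : Finset V} (hH : ∀ S ∈ H, S ⊆ W) :
    cliqueSets H i (R ∩ W.powersetCard i) = cliqueSets H i R := by
  refine filter_congr fun S hS => forall₂_congr fun T hT => ?_
  rw [mem_inter, and_iff_left]
  exact powersetCard_mono (hH S hS) hT

/-- `A` contains a fraction `1 / m` of every clique set inside `H`, up to an additive error `e`.
This is the form of hypergraph regularity that survives refinement. -/
def IsEvenPart (i m : ℕ) (e : ℝ) (A H : Finset (Finset V)) : Prop :=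
  ∀ R, |(#(cliqueSets A i R) : ℝ) - #(cliqueSets H i R) / m| ≤ e

namespace IsEvenPart

theorem mono (h : IsEvenPart i m e A H) (he : e ≤ e') : IsEvenPart i m e' A H :=
  fun R => (h R).trans he

theorem abs_card_sub_le (h : IsEvenPart i m e A H) (hAH : A ⊆ H) : |(#A : ℝ) - #H / m| ≤ e := by
  have hself : ∀ B ⊆ H, cliqueSets B i (H.biUnion (powersetCard i)) = B := fun B hB =>
    filter_true_of_mem fun S hS T hT => mem_biUnion.2 ⟨S, hB hS, hT⟩
  simpa only [hself A hAH, hself H subset_rfl] using h (H.biUnion (powersetCard i))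

theorem restrict (h : IsEvenPart i m e A H) (R : Finset (Finset V)) :
    IsEvenPart i m e (cliqueSets A i R) (cliqueSets H i R) := fun R' => by
  simpa only [cliqueSets_cliqueSets] using h (R ∩ R')

theorem trans (hA : IsEvenPart i m' e' A B) (hB : IsEvenPart i m e B H) :
    IsEvenPart i (m * m') (e + e') A H := fun R => by
  have hB' : |(#(cliqueSets B i R) : ℝ) / m' - #(cliqueSets H i R) / m / m'| ≤ e := by
    rw [← sub_div, abs_div, Nat.abs_cast, div_eq_mul_inv]
    exact (mul_le_of_le_one_right (abs_nonneg _) (Nat.cast_inv_le_one m')).trans (hB R)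
  rw [Nat.cast_mul, ← div_div]
  linarith [abs_sub_le (#(cliqueSets A i R) : ℝ) _ _ |>.trans (add_le_add (hA R) hB')]

end IsEvenPart

theorem log_le_mul_pow {n N p : ℕ} (hm : 0 < m) (hn : 0 < n) (hN0 : 0 < N)
    (hN : N ≤ 2 ^ n ^ p) : Real.log (2 * (N * m)) ≤ (2 * m + 1) * (n : ℝ) ^ p := by
  have hpow : (1 : ℝ) ≤ (n : ℝ) ^ p := one_le_pow₀ (by exact_mod_cast hn)
  have hlogm : Real.log (2 * m) ≤ 2 * m :=
    (Real.log_le_sub_one_of_pos (by positivity)).trans (by linarith)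
  have hlogN : Real.log N ≤ (n : ℝ) ^ p := calc
    Real.log N ≤ Real.log (2 ^ n ^ p) := Real.log_le_log (by positivity) (by exact_mod_cast hN)
    _ = (n : ℝ) ^ p * Real.log 2 := by rw [Real.log_pow, Nat.cast_pow]
    _ ≤ (n : ℝ) ^ p := mul_le_of_le_one_right (by positivity) (by linarith [Real.log_two_lt_d9])
  rw [mul_left_comm, Real.log_mul (by positivity) (by positivity)]
  nlinarith

/- There are only `2 ^ O(#W ^ (j - 1))` clique sets, so a colouring can serve all of them. -/
theorem exists_coloring_isEvenPart {W : Finset V} {δ : ℝ} (hδ0 : 0 < δ) (hδ1 : δ ≤ 1)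
    (hj : 1 ≤ j) (hm : 0 < m) (hW : (2 * m + 1) * 4 / δ ^ 2 ≤ #W) (hH : H ⊆ W.powersetCard j) :
    ∃ χ : Finset V → ℕ, (∀ S, χ S < m) ∧
      ∀ c < m, IsEvenPart (j - 1) m (δ * (#W : ℝ) ^ j) {S ∈ H | χ S = c} H := by
  set n := #W
  have hn : 0 < n := by
    have : (0 : ℝ) < n := lt_of_lt_of_le (by positivity) hW
    exact_mod_cast this
  set 𝓔 := (W.powersetCard (j - 1)).powerset.image (cliqueSets H (j - 1)) with h𝓔
  have hcard : #𝓔 ≤ 2 ^ n ^ (j - 1) := by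
    refine card_image_le.trans ?_
    rw [card_powerset, card_powersetCard]
    exact Nat.pow_le_pow_right two_pos (Nat.choose_le_pow _ _)
  have hlog := log_le_mul_pow hm hn (card_pos.2 ((powerset_nonempty _).image _)) hcard
  have hnj : (n : ℝ) ^ j = n ^ (j - 1) * n := by rw [← pow_succ, Nat.sub_add_cancel hj]
  have hHj : (#H : ℝ) ≤ n ^ j := by
    exact_mod_cast (card_le_card hH).trans
      ((card_powersetCard _ _).trans_le (Nat.choose_le_pow _ _))
  obtain ⟨χ, hχ, heven⟩ := exists_balanced_coloring (H := H) (𝓔 := 𝓔) hm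
    (by simp only [h𝓔, forall_mem_image]; exact fun _ _ => cliqueSets_subset)
    (half_pos hδ0) (by linarith)
  refine ⟨χ, hχ, fun c hc R => ?_⟩
  have hR : cliqueSets H (j - 1) R ∈ 𝓔 :=
    mem_image.2 ⟨R ∩ W.powersetCard (j - 1), mem_powerset.2 inter_subset_right,
      cliqueSets_inter_powersetCard fun S hS => (mem_powersetCard.1 (hH hS)).1⟩
  rw [cliqueSets, filter_comm, ← cliqueSets]
  calc _ ≤ Real.log (2 * (#𝓔 * m)) / (δ / 2) + δ / 2 * #H := heven _ hR c hc
    _ ≤ (2 * m + 1) * (n : ℝ) ^ (j - 1) / (δ / 2) + δ / 2 * n ^ j := by gcongr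
    _ = (2 * m + 1) * 4 / δ ^ 2 * (n ^ (j - 1) * (δ / 2)) + δ / 2 * n ^ j := by field_simp; ring
    _ ≤ n * (n ^ (j - 1) * (δ / 2)) + δ / 2 * n ^ j := by gcongr
    _ = δ * (n : ℝ) ^ j := by rw [hnj]; ring

end CliqueSets

section Families

variable {V : Type*} [DecidableEq V]

/-- `A` is a regular part of `H` of density `1 / m`, tested on the clique sets inside `H`. -/
def IsRegularPart (i m : ℕ) (ε : ℝ) (A H : Finset (Finset V)) : Prop :=
  ∀ R, ε * #H ≤ #(cliqueSets H i R) →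
    |(#(cliqueSets A i R) : ℝ) - #(cliqueSets H i R) / m| ≤ ε * #(cliqueSets H i R)

section RegularParts

variable {A H : Finset (Finset V)} {i m : ℕ} {e ε : ℝ}

theorem IsRegularPart.isEvenPart (h : IsRegularPart i m ε A H) (hε : 0 ≤ ε) (hAH : A ⊆ H) :
    IsEvenPart i m (ε * #H) A H := fun R => by
  have hH : (#(cliqueSets H i R) : ℝ) ≤ #H := by exact_mod_cast card_le_card cliqueSets_subset
  obtain hlarge | hsmall := le_or_gt (ε * #H : ℝ) #(cliqueSets H i R)
  · exact (h R hlarge).trans (by gcongr)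
  · have hA : (#(cliqueSets A i R) : ℝ) ≤ #(cliqueSets H i R) := by
      exact_mod_cast card_le_card (cliqueSets_mono_left hAH)
    have hdiv : (#(cliqueSets H i R) : ℝ) / m ≤ #(cliqueSets H i R) := by
      rw [div_eq_mul_inv]
      exact mul_le_of_le_one_right (Nat.cast_nonneg _) (Nat.cast_inv_le_one m)
    exact (abs_sub_le_of_nonneg_of_le (Nat.cast_nonneg _) hA (by positivity) hdiv).trans hsmall.le

theorem IsEvenPart.isRegularPart (h : IsEvenPart i m e A H) (hε : 0 ≤ ε)
    (he : e ≤ ε * (ε * #H)) : IsRegularPart i m ε A H := fun R hR =>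
  (h R).trans (he.trans (by gcongr))

end RegularParts

theorem mem_sing {U T : Finset V} : T ∈ sing U ↔ ∃ v ∈ U, {v} = T := by
  simp [sing]

namespace PartFam

variable {F : PartFam V} {k i j : ℕ} {a : ℕ → ℕ} {I J K S T : Finset V}

theorem mem_cross : S ∈ F.cross i ↔ (S ⊆ F.gnd ∧ #S = i) ∧ Set.InjOn F.vClass S := by
  rw [cross, mem_filter, mem_powersetCard]
  simp only [Set.InjOn, mem_coe, ne_eq, not_imp_not]

theorem cross_subset_powersetCard : F.cross i ⊆ F.gnd.powersetCard i :=
  filter_subset _ _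

theorem mem_cross_of_mem_powersetCard (hJ : J ∈ F.cross j) (hT : T ∈ J.powersetCard i) :
    T ∈ F.cross i := by
  rw [mem_powersetCard] at hT
  rw [mem_cross] at hJ ⊢
  exact ⟨⟨hT.1.trans hJ.1.1, hT.2⟩, hJ.2.mono hT.1⟩

theorem card_image_of_mem_cross (hS : S ∈ F.cross j) : #(S.image F.vClass) = j := by
  rw [mem_cross] at hS
  rw [card_image_of_injOn hS.2, hS.1.2]

theorem eq_of_image_vClass_eq (hJ : J ∈ F.cross j) (hS : S ⊆ J) (hT : T ⊆ J)
    (h : S.image F.vClass = T.image F.vClass) : S = T := by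
  rw [← coe_inj, ← (mem_cross.1 hJ).2.image_eq_image_iff (coe_subset.2 hS) (coe_subset.2 hT)]
  exact_mod_cast h

theorem KsetC_eq_cliqueSets (hj : 2 ≤ j) {R : Finset (Finset V)} (hR : R ⊆ F.cross (j - 1)) :
    KsetC F.gnd (F.cross j) (j - 1) j R = cliqueSets (F.cross j) (j - 1) R := by
  ext S
  rw [mem_cliqueSets, KsetC]
  split_ifs with h
  · rw [mem_filter, h]
    simp only [mem_powersetCard, card_eq_one]
    refine and_congr_right fun _ => ⟨?_, fun h v hv => h _ ⟨singleton_subset_iff.2 hv, v, rfl⟩⟩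
    rintro h _ ⟨hT, v, rfl⟩
    exact h v (singleton_subset_iff.1 hT)
  · rw [Kset, mem_filter]
    refine and_congr_left fun hS => ⟨fun hSj => ?_, fun h => cross_subset_powersetCard h⟩
    obtain ⟨hSW, rfl⟩ := mem_powersetCard.1 hSj
    refine mem_cross.2 ⟨⟨hSW, rfl⟩, fun u hu v hv huv => ?_⟩
    obtain ⟨T, huvT, hTS, hT⟩ := exists_subsuperset_card_eq
      (show {u, v} ⊆ S from insert_subset hu (singleton_subset_iff.2 hv))
      (n := #S - 1) (card_le_two.trans (by lia)) (Nat.sub_le _ _)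
    exact (mem_cross.1 (hR (hS T (mem_powersetCard.2 ⟨hTS, hT⟩)))).2
      (huvT (mem_insert_self _ _)) (huvT (mem_insert_of_mem (mem_singleton_self _))) huv

/-- The part of level `i` containing the crossing `i`-set `T`, as an `i`-graph. It treats vertex
classes (level `1`) like the classes of higher levels. -/
def part (F : PartFam V) (i : ℕ) (T : Finset V) : Finset (Finset V) :=
  if i = 1 then sing (T.sup F.vClass) else F.cls i T

theorem part_one : F.part 1 T = sing (T.sup F.vClass) :=
  if_pos rfl

theorem part_of_two_le (hi : 2 ≤ i) : F.part i T = F.cls i T :=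
  if_neg (by lia)

theorem mem_part_one {u v : V} : {u} ∈ F.part 1 {v} ↔ u ∈ F.vClass v := by
  simp [part_one, mem_sing]

theorem mem_polyad : S ∈ F.polyad i J ↔ ∃ T ∈ J.powersetCard i, S ∈ F.part i T := by
  obtain rfl | hi := eq_or_ne i 1
  · simp only [polyad, if_true, part_one, mem_sing, mem_sup, mem_powersetCard, card_eq_one]
    constructor
    · rintro ⟨u, ⟨v, hv, hu⟩, rfl⟩
      exact ⟨{v}, ⟨singleton_subset_iff.2 hv, v, rfl⟩, u, ⟨v, mem_singleton_self v, hu⟩, rfl⟩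
    · rintro ⟨T, ⟨hT, -⟩, u, ⟨v, hv, hu⟩, rfl⟩
      exact ⟨u, ⟨v, hT hv, hu⟩, rfl⟩
  · simp only [polyad, part, if_neg hi, mem_sup]

theorem part_subset_polyad (hT : T ∈ J.powersetCard i) : F.part i T ⊆ F.polyad i J :=
  fun _ hS => mem_polyad.2 ⟨T, hT, hS⟩

namespace IsFamily

theorem vClass_eq_iff (hF : F.IsFamily k a) {u v : V} (hu : u ∈ F.gnd) (hv : v ∈ F.gnd) :
    F.vClass u = F.vClass v ↔ u ∈ F.vClass v :=
  ⟨fun h => h ▸ hF.1 u hu, hF.2.2.1 u hu v hv⟩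

theorem mem_cls_self (hF : F.IsFamily k a) (hj : 2 ≤ j) (hjk : j ≤ k - 1)
    (hJ : J ∈ F.cross j) : J ∈ F.cls j J :=
  (hF.2.2.2.2.2 j hj hjk).1 J hJ

theorem cls_eq_of_mem (hF : F.IsFamily k a) (hj : 2 ≤ j) (hjk : j ≤ k - 1)
    (hJ : J ∈ F.cross j) (hI : I ∈ F.cls j J) : F.cls j I = F.cls j J :=
  (hF.2.2.2.2.2 j hj hjk).2.1 J hJ I hI

theorem cls_subset_polyCliques (hF : F.IsFamily k a) (hj : 2 ≤ j) (hjk : j ≤ k - 1)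
    (hJ : J ∈ F.cross j) : F.cls j J ⊆ F.polyCliques j J :=
  (hF.2.2.2.2.2 j hj hjk).2.2.1 J hJ

theorem card_image_cls (hF : F.IsFamily k a) (hj : 2 ≤ j) (hjk : j ≤ k - 1)
    (hJ : J ∈ F.cross j) : #((F.polyCliques j J).image (F.cls j)) = a j :=
  (hF.2.2.2.2.2 j hj hjk).2.2.2.2 J hJ

theorem mem_part_self (hF : F.IsFamily k a) (hi : 1 ≤ i) (hik : i ≤ k - 1)
    (hT : T ∈ F.cross i) : T ∈ F.part i T := by
  obtain rfl | hi2 := hi.eq_or_lt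
  · obtain ⟨⟨hTW, h1⟩, -⟩ := mem_cross.1 hT
    obtain ⟨v, rfl⟩ := card_eq_one.1 h1
    exact mem_part_one.2 (hF.1 v (singleton_subset_iff.1 hTW))
  · rw [part_of_two_le hi2]
    exact hF.mem_cls_self hi2 hik hT

theorem part_subset_cross (hF : F.IsFamily k a) (hi : 1 ≤ i) (hik : i ≤ k - 1)
    (hT : T ∈ F.cross i) : F.part i T ⊆ F.cross i := by
  intro S hS
  obtain rfl | hi2 := hi.eq_or_lt
  · rw [part_one, mem_sing] at hS
    obtain ⟨u, hu, rfl⟩ := hS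
    obtain ⟨v, hv, huv⟩ := mem_sup.1 hu
    have := hF.2.1 v ((mem_cross.1 hT).1.1 hv) huv
    simp [mem_cross, this]
  · rw [part_of_two_le hi2] at hS
    exact (hF.2.2.2.2.2 i hi2 hik).2.2.2.1 T hT (hF.cls_subset_polyCliques hi2 hik hT hS)

theorem part_eq_of_mem (hF : F.IsFamily k a) (hi : 1 ≤ i) (hik : i ≤ k - 1)
    (hT : T ∈ F.cross i) (hS : S ∈ F.part i T) : F.part i S = F.part i T := by
  obtain rfl | hi2 := hi.eq_or_lt
  · obtain ⟨⟨hTW, h1⟩, -⟩ := mem_cross.1 hT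
    obtain ⟨⟨hSW, h1'⟩, -⟩ := mem_cross.1 (hF.part_subset_cross le_rfl hik hT hS)
    obtain ⟨v, rfl⟩ := card_eq_one.1 h1
    obtain ⟨u, rfl⟩ := card_eq_one.1 h1'
    rw [singleton_subset_iff] at hTW hSW
    rw [part_one, part_one, sup_singleton, sup_singleton,
      (hF.vClass_eq_iff hSW hTW).2 (mem_part_one.1 hS)]
  · rw [part_of_two_le hi2] at hS ⊢
    rw [part_of_two_le hi2]
    exact hF.cls_eq_of_mem hi2 hik hT hS

theorem polyad_subset_cross (hF : F.IsFamily k a) (hi : 1 ≤ i) (hik : i ≤ k - 1)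
    (hJ : J ∈ F.cross j) : F.polyad i J ⊆ F.cross i := fun S hS => by
  obtain ⟨T, hT, hS⟩ := mem_polyad.1 hS
  exact hF.part_subset_cross hi hik (mem_cross_of_mem_powersetCard hJ hT) hS

theorem polyCliques_eq (hF : F.IsFamily k a) (hj : 2 ≤ j) (hjk : j ≤ k) (hJ : J ∈ F.cross j) :
    F.polyCliques j J = cliqueSets (F.cross j) (j - 1) (F.polyad (j - 1) J) :=
  KsetC_eq_cliqueSets hj (hF.polyad_subset_cross (by lia) (by lia) hJ)

theorem polyCliques_subset_cross (hF : F.IsFamily k a) (hj : 2 ≤ j) (hjk : j ≤ k)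
    (hJ : J ∈ F.cross j) : F.polyCliques j J ⊆ F.cross j :=
  (hF.polyCliques_eq hj hjk hJ).trans_subset cliqueSets_subset

theorem exists_mem_part_of_mem_polyCliques (hF : F.IsFamily k a) (hj : 2 ≤ j) (hjk : j ≤ k)
    (hJ : J ∈ F.cross j) (hI : I ∈ F.polyCliques j J) (hT : T ∈ I.powersetCard (j - 1)) :
    ∃ T' ∈ J.powersetCard (j - 1), T ∈ F.part (j - 1) T' := by
  rw [hF.polyCliques_eq hj hjk hJ, mem_cliqueSets] at hI
  exact mem_polyad.1 (hI.2 T hT)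

theorem image_vClass_eq_of_mem_polyCliques_of_part (hF : F.IsFamily k a) (hj : 2 ≤ j)
    (hjk : j ≤ k) (hpart : ∀ T ∈ F.cross (j - 1), ∀ S ∈ F.part (j - 1) T,
      S.image F.vClass = T.image F.vClass)
    (hJ : J ∈ F.cross j) (hI : I ∈ F.polyCliques j J) :
    I.image F.vClass = J.image F.vClass := by
  have hIc := hF.polyCliques_subset_cross hj hjk hJ hI
  refine eq_of_subset_of_card_le (image_subset_iff.2 fun v hv => ?_)
    (by rw [card_image_of_mem_cross hIc, card_image_of_mem_cross hJ])
  have hcard := (mem_cross.1 hIc).1.2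
  obtain ⟨T, hvT, hTI, hT⟩ := exists_subsuperset_card_eq (singleton_subset_iff.2 hv)
    (n := j - 1) (by rw [card_singleton]; lia) (by lia)
  obtain ⟨T', hT', hTT'⟩ := hF.exists_mem_part_of_mem_polyCliques hj hjk hJ hI
    (mem_powersetCard.2 ⟨hTI, hT⟩)
  refine image_subset_image (mem_powersetCard.1 hT').1 ?_
  rw [← hpart T' (mem_cross_of_mem_powersetCard hJ hT') T hTT']
  exact mem_image_of_mem _ (singleton_subset_iff.1 hvT)

theorem image_vClass_eq_of_mem_part (hF : F.IsFamily k a) (hi : 1 ≤ i) (hik : i ≤ k - 1)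
    (hT : T ∈ F.cross i) (hS : S ∈ F.part i T) : S.image F.vClass = T.image F.vClass := by
  induction i, hi using Nat.le_induction generalizing S T with
  | base =>
    obtain ⟨⟨hTW, h1⟩, -⟩ := mem_cross.1 hT
    obtain ⟨⟨hSW, h1'⟩, -⟩ := mem_cross.1 (hF.part_subset_cross le_rfl hik hT hS)
    obtain ⟨v, rfl⟩ := card_eq_one.1 h1
    obtain ⟨u, rfl⟩ := card_eq_one.1 h1'
    rw [singleton_subset_iff] at hTW hSW
    rw [image_singleton, image_singleton, (hF.vClass_eq_iff hSW hTW).2 (mem_part_one.1 hS)]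
  | succ i hi ih =>
    rw [part_of_two_le (by lia)] at hS
    refine hF.image_vClass_eq_of_mem_polyCliques_of_part (j := i + 1) (by lia) (by lia) ?_ hT
      (hF.cls_subset_polyCliques (by lia) hik hT hS)
    rw [Nat.add_sub_cancel]
    exact fun _ hT' _ hS' => ih (by lia) hT' hS'

theorem image_vClass_eq_of_mem_polyCliques (hF : F.IsFamily k a) (hj : 2 ≤ j) (hjk : j ≤ k)
    (hJ : J ∈ F.cross j) (hI : I ∈ F.polyCliques j J) : I.image F.vClass = J.image F.vClass :=
  hF.image_vClass_eq_of_mem_polyCliques_of_part hj hjk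
    (fun _ hT _ hS => hF.image_vClass_eq_of_mem_part (by lia) (by lia) hT hS) hJ hI

theorem mem_polyad_iff_mem_cls (hF : F.IsFamily k a) (hj : 2 ≤ j) (hjk : j ≤ k - 1)
    (hK : K ∈ F.cross i) (hJ : J ∈ K.powersetCard j) (hS : S ∈ F.polyCliques j J) :
    S ∈ F.polyad j K ↔ S ∈ F.cls j J := by
  rw [← part_of_two_le hj]
  refine ⟨fun hSK => ?_, fun h => part_subset_polyad hJ h⟩
  obtain ⟨T, hT, hST⟩ := mem_polyad.1 hSK
  have hTS := hF.image_vClass_eq_of_mem_part (by lia) hjk (mem_cross_of_mem_powersetCard hK hT) hST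
  have hJS := hF.image_vClass_eq_of_mem_polyCliques hj (by lia)
    (mem_cross_of_mem_powersetCard hK hJ) hS
  rwa [← eq_of_image_vClass_eq hK (mem_powersetCard.1 hT).1 (mem_powersetCard.1 hJ).1
    (hTS.symm.trans hJS)]

theorem polyad_subset_of_mem_polyCliques (hF : F.IsFamily k a) (hj : 2 ≤ j) (hjk : j ≤ k)
    (hJ : J ∈ F.cross j) (hI : I ∈ F.polyCliques j J) :
    F.polyad (j - 1) I ⊆ F.polyad (j - 1) J := fun S hS => by
  obtain ⟨T, hT, hST⟩ := mem_polyad.1 hS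
  obtain ⟨T', hT', hTT'⟩ := hF.exists_mem_part_of_mem_polyCliques hj hjk hJ hI hT
  rw [hF.part_eq_of_mem (by lia) (by lia) (mem_cross_of_mem_powersetCard hJ hT') hTT'] at hST
  exact part_subset_polyad hT' hST

theorem mem_polyCliques_comm (hF : F.IsFamily k a) (hj : 2 ≤ j) (hjk : j ≤ k)
    (hJ : J ∈ F.cross j) (hI : I ∈ F.polyCliques j J) : J ∈ F.polyCliques j I := by
  have hIc := hF.polyCliques_subset_cross hj hjk hJ hI
  rw [hF.polyCliques_eq hj hjk hIc, mem_cliqueSets]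
  refine ⟨hJ, fun T' hT' => ?_⟩
  have hT'c := mem_cross_of_mem_powersetCard hJ hT'
  obtain ⟨T, hTI, hTT'⟩ := subset_image_iff.1 ((image_subset_image (mem_powersetCard.1 hT').1).trans
    (hF.image_vClass_eq_of_mem_polyCliques hj hjk hJ hI).superset)
  have hT : T ∈ I.powersetCard (j - 1) := mem_powersetCard.2 ⟨hTI, by
    rw [← card_image_of_mem_cross hT'c, ← hTT',
      card_image_of_injOn ((mem_cross.1 hIc).2.mono (coe_subset.2 hTI))]⟩
  obtain ⟨T'', hT'', hTT''⟩ := hF.exists_mem_part_of_mem_polyCliques hj hjk hJ hI hT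
  have hT''c := mem_cross_of_mem_powersetCard hJ hT''
  have hT''T' : T'' = T' := eq_of_image_vClass_eq hJ (mem_powersetCard.1 hT'').1
    (mem_powersetCard.1 hT').1
    ((hF.image_vClass_eq_of_mem_part (by lia) (by lia) hT''c hTT'').symm.trans hTT')
  subst hT''T'
  refine part_subset_polyad hT ?_
  rw [hF.part_eq_of_mem (by lia) (by lia) hT''c hTT'']
  exact hF.mem_part_self (by lia) (by lia) hT''c

theorem polyad_eq_of_mem_polyCliques (hF : F.IsFamily k a) (hj : 2 ≤ j) (hjk : j ≤ k)
    (hJ : J ∈ F.cross j) (hI : I ∈ F.polyCliques j J) :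
    F.polyad (j - 1) I = F.polyad (j - 1) J :=
  (hF.polyad_subset_of_mem_polyCliques hj hjk hJ hI).antisymm
    (hF.polyad_subset_of_mem_polyCliques hj hjk (hF.polyCliques_subset_cross hj hjk hJ hI)
      (hF.mem_polyCliques_comm hj hjk hJ hI))

theorem polyCliques_eq_of_mem_polyCliques (hF : F.IsFamily k a) (hj : 2 ≤ j) (hjk : j ≤ k)
    (hJ : J ∈ F.cross j) (hI : I ∈ F.polyCliques j J) : F.polyCliques j I = F.polyCliques j J := by
  rw [polyCliques, hF.polyad_eq_of_mem_polyCliques hj hjk hJ hI, polyCliques]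

theorem exists_cross_superset (hF : F.IsFamily k a) (hJ : J ∈ F.cross j) (hjk : j ≤ k) :
    ∃ K ∈ F.cross k, J ⊆ K := by
  obtain ⟨⟨hJW, -⟩, hinj⟩ := mem_cross.1 hJ
  obtain ⟨X, hJX, hXW, hX⟩ := exists_subsuperset_card_eq (image_subset_image hJW)
    ((card_image_of_mem_cross hJ).trans_le hjk) (hF.2.2.2.1.symm ▸ hF.2.2.2.2.1)
  obtain ⟨K, hJK, hKW, hK⟩ := (hinj.bijOn_image).exists_extend_of_subset (coe_subset.2 hJW)
    (by exact_mod_cast hJX) (by simpa [Set.SurjOn] using coe_subset.2 hXW)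
  lift K to Finset V using F.gnd.finite_toSet.subset hKW
  refine ⟨K, mem_cross.2 ⟨⟨coe_subset.1 hKW, ?_⟩, hK.injOn⟩, coe_subset.1 hJK⟩
  rw [← card_image_of_injOn hK.injOn, ← hX, ← coe_inj.1 (coe_image.trans hK.image_eq)]

theorem regPairC_iff_isRegularPart (hF : F.IsFamily k a) {ε : ℝ} (hj : 2 ≤ j) (hjk : j ≤ k - 1)
    (hK : K ∈ F.cross k) (hJK : J ∈ K.powersetCard j) :
    RegPairC F.gnd (F.cross j) (j - 1) ε (1 / (a j : ℝ)) (F.polyad j K) (F.polyad (j - 1) J) ↔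
      IsRegularPart (j - 1) (a j) ε (F.cls j J) (F.polyCliques j J) := by
  have hJ := mem_cross_of_mem_powersetCard hK hJK
  have hcross : F.polyad (j - 1) J ⊆ F.cross (j - 1) := hF.polyad_subset_cross (by lia) (by lia) hJ
  have hcliques (R : Finset (Finset V)) : KsetC F.gnd (F.cross j) (j - 1) j
      (F.polyad (j - 1) J ∩ R) = cliqueSets (F.polyCliques j J) (j - 1) R := by
    rw [KsetC_eq_cliqueSets hj (inter_subset_left.trans hcross), ← cliqueSets_cliqueSets,
      hF.polyCliques_eq hj (by lia) hJ]
  have hcls (R : Finset (Finset V)) : F.polyad j K ∩ cliqueSets (F.polyCliques j J) (j - 1) R =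
      cliqueSets (F.cls j J) (j - 1) R := by
    ext S
    simp only [mem_inter, mem_cliqueSets, ← and_assoc]
    refine and_congr_left fun _ => ⟨fun h => ?_, fun h => ?_⟩
    · exact (hF.mem_polyad_iff_mem_cls hj hjk hK hJK h.2).1 h.1
    · have hS := hF.cls_subset_polyCliques hj hjk hJ h
      exact ⟨(hF.mem_polyad_iff_mem_cls hj hjk hK hJK hS).2 h, hS⟩
  rw [RegPairC, Nat.sub_add_cancel (by lia : 1 ≤ j), ← polyCliques]
  simp only [one_div_mul_eq_div]
  constructor
  · intro h R
    simpa only [hcliques, hcls] using h _ (inter_subset_left (s₂ := R))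
  · intro h R hR
    simpa only [← hcls, ← hcliques, inter_eq_right.2 hR] using h R

/- Since there are at least `k` vertex classes, every crossing set is contained in a crossing
`k`-set, so the condition on polyad complexes of crossing `k`-sets reaches every class. -/
theorem polyadReg_iff (hF : F.IsFamily k a) {ε : ℝ} :
    F.PolyadReg k a ε ↔ ∀ j, 2 ≤ j → j ≤ k - 1 → ∀ J ∈ F.cross j,
      IsRegularPart (j - 1) (a j) ε (F.cls j J) (F.polyCliques j J) := by
  refine ⟨fun h j hj hjk J hJ => ?_, fun h K hK j hj hjk J hJ =>
    (hF.regPairC_iff_isRegularPart hj hjk hK hJ).2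
      (h j hj hjk J (mem_cross_of_mem_powersetCard hK hJ))⟩
  obtain ⟨K, hK, hJK⟩ := hF.exists_cross_superset hJ (by lia)
  have hJ' : J ∈ K.powersetCard j := mem_powersetCard.2 ⟨hJK, (mem_cross.1 hJ).1.2⟩
  exact (hF.regPairC_iff_isRegularPart hj hjk hK hJ').1 (h K hK j hj hjk J hJ')

theorem isEvenPart_cls (hF : F.IsFamily k a) {ε : ℝ} (hε : 0 ≤ ε) (hreg : F.PolyadReg k a ε)
    (hj : 2 ≤ j) (hjk : j ≤ k - 1) (hJ : J ∈ F.cross j) :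
    IsEvenPart (j - 1) (a j) (ε * (#F.gnd : ℝ) ^ j) (F.cls j J) (F.polyCliques j J) := by
  refine ((hF.polyadReg_iff.1 hreg j hj hjk J hJ).isEvenPart hε
    (hF.cls_subset_polyCliques hj hjk hJ)).mono (mul_le_mul_of_nonneg_left ?_ hε)
  have hcard := card_le_card
    ((hF.polyCliques_subset_cross hj (by lia) hJ).trans cross_subset_powersetCard)
  exact_mod_cast hcard.trans ((card_powersetCard _ _).trans_le (Nat.choose_le_pow _ _))

theorem exists_classIndex (hF : F.IsFamily k a) (hj : 2 ≤ j) (hjk : j ≤ k - 1) :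
    ∃ idx : Finset V → ℕ, ∀ J ∈ F.cross j, idx J < a j ∧
      (∀ I ∈ F.polyCliques j J, idx I = idx J → F.cls j I = F.cls j J) ∧
      ∀ p < a j, ∃ J₀ ∈ F.polyCliques j J, {S ∈ F.polyCliques j J | idx S = p} = F.cls j J₀ := by
  choose e he using fun 𝓢 : Finset (Finset V) => exists_bijOn_range_card (𝓢.image (F.cls j))
  have hpoly : ∀ J ∈ F.cross j, ∀ I ∈ F.polyCliques j J, F.polyCliques j I = F.polyCliques j J :=
    fun J hJ I hI => hF.polyCliques_eq_of_mem_polyCliques hj (by lia) hJ hI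
  refine ⟨fun S => e (F.polyCliques j S) (F.cls j S), fun J hJ => ?_⟩
  have heJ := hF.card_image_cls hj hjk hJ ▸ he (F.polyCliques j J)
  have hcls := mem_image_of_mem (F.cls j)
    (hF.cls_subset_polyCliques hj hjk hJ (hF.mem_cls_self hj hjk hJ))
  refine ⟨mem_range.1 (heJ.mapsTo hcls), fun I hI h => ?_, fun p hp => ?_⟩
  · simp only [hpoly J hJ I hI] at h
    exact heJ.injOn (mem_image_of_mem _ hI) hcls h
  · obtain ⟨_, hC, rfl⟩ := heJ.surjOn (mem_coe.2 (mem_range.2 hp))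
    obtain ⟨J₀, hJ₀, rfl⟩ := mem_image.1 hC
    have hJ₀c := hF.polyCliques_subset_cross hj (by lia) hJ hJ₀
    refine ⟨J₀, hJ₀, ?_⟩
    ext S
    rw [mem_filter]
    constructor
    · rintro ⟨hS, h⟩
      simp only [hpoly J hJ S hS] at h
      rw [← heJ.injOn (mem_image_of_mem _ hS) hC h]
      exact hF.mem_cls_self hj hjk (hF.polyCliques_subset_cross hj (by lia) hJ hS)
    · intro hS
      have hS' := hpoly J hJ J₀ hJ₀ ▸ hF.cls_subset_polyCliques hj hjk hJ₀c hS
      exact ⟨hS', by simp only [hpoly J hJ S hS', hF.cls_eq_of_mem hj hjk hJ₀c hS]⟩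

end IsFamily

end PartFam

end Families

section LabelledColorings

theorem card_image_fiber {α β : Type*} [DecidableEq α] [DecidableEq β] (s : Finset α)
    (f : α → β) : #(s.image fun x => {y ∈ s | f y = f x}) = #(s.image f) := by
  rw [show (fun x => {y ∈ s | f y = f x}) = (fun c => {y ∈ s | f y = c}) ∘ f from rfl,
    ← image_image, card_image_of_injOn]
  rintro _ hc c' - h
  obtain ⟨x, hx, rfl⟩ := mem_image.1 hc
  exact (mem_filter.1 (h.subset (mem_filter.2 ⟨hx, rfl⟩))).2

variable {V : Type*}

/-- The rainbow `j`-subsets of `W`: those on which the vertex colouring `col` is injective. -/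
def rainbow (W : Finset V) (col : V → ℕ) (j : ℕ) : Finset (Finset V) :=
  {S ∈ W.powersetCard j | #(S.image col) = #S}

theorem mem_rainbow {W S : Finset V} {col : V → ℕ} {j : ℕ} :
    S ∈ rainbow W col j ↔ (S ⊆ W ∧ #S = j) ∧ Set.InjOn col S := by
  rw [rainbow, mem_filter, mem_powersetCard, card_image_iff]

/-- A colouring of the vertices of `W` together with a label for each vertex set. Vertices and
the empty set get a dummy label, so that labels can be compared on all subsets of a vertex set. -/
structure LabelledColoring (W : Finset V) where
  col : V → ℕ
  lab : Finset V → ℕ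
  lab_eq_zero : ∀ S, #S ≤ 1 → lab S = 0

namespace LabelledColoring

variable {W I J S T : Finset V} {C : LabelledColoring W} {M N : Finset ℕ} {𝒰 : Finset (Finset ℕ)}
  {i j k : ℕ} {b : ℕ → ℕ}

/-- The set of vertices of `S` with colour in `M`. -/
def restrict (C : LabelledColoring W) (S : Finset V) (M : Finset ℕ) : Finset V :=
  {v ∈ S | C.col v ∈ M}

theorem mem_restrict {v : V} : v ∈ C.restrict S M ↔ v ∈ S ∧ C.col v ∈ M :=
  mem_filter

theorem restrict_subset : C.restrict S M ⊆ S :=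
  filter_subset _ _

theorem restrict_restrict (h : M ⊆ N) : C.restrict (C.restrict S N) M = C.restrict S M := by
  ext v
  simp only [mem_restrict, and_assoc, and_iff_right_of_imp (@h (C.col v))]

theorem restrict_eq_self (h : S.image C.col ⊆ M) : C.restrict S M = S :=
  filter_true_of_mem fun _ hv => h (mem_image_of_mem _ hv)

/-- The rainbow sets with the colours of `J` whose subsets with colour sets in `𝒰` have the same
labels as the corresponding subsets of `J`. All subsets give the class of `J`, proper subsets
the clique set of its polyad. -/
def agreeing (C : LabelledColoring W) (J : Finset V) (𝒰 : Finset (Finset ℕ)) :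
    Finset (Finset V) :=
  {I ∈ rainbow W C.col #J | I.image C.col = J.image C.col ∧
    ∀ M ∈ 𝒰, C.lab (C.restrict I M) = C.lab (C.restrict J M)}

theorem mem_agreeing : I ∈ C.agreeing J 𝒰 ↔ I ∈ rainbow W C.col #J ∧
    I.image C.col = J.image C.col ∧ ∀ M ∈ 𝒰, C.lab (C.restrict I M) = C.lab (C.restrict J M) :=
  mem_filter

theorem image_restrict (hM : M ⊆ S.image C.col) : (C.restrict S M).image C.col = M := by
  ext c
  simp only [mem_image, mem_restrict]
  constructor
  · rintro ⟨v, hv, rfl⟩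
    exact hv.2
  · intro hc
    obtain ⟨v, hv, rfl⟩ := mem_image.1 (hM hc)
    exact ⟨v, ⟨hv, hc⟩, rfl⟩

theorem restrict_image (hS : Set.InjOn C.col S) (hT : T ⊆ S) :
    C.restrict S (T.image C.col) = T := by
  ext v
  rw [mem_restrict, mem_image]
  constructor
  · rintro ⟨hv, u, hu, huv⟩
    rwa [← hS (hT hu) hv huv]
  · exact fun hv => ⟨hT hv, v, hv, rfl⟩

theorem card_image_of_mem_rainbow (hJ : J ∈ rainbow W C.col j) : #(J.image C.col) = j := by
  rw [mem_rainbow] at hJ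
  rw [card_image_of_injOn hJ.2, hJ.1.2]

theorem mem_rainbow_of_mem_powersetCard (hJ : J ∈ rainbow W C.col j) (hT : T ∈ J.powersetCard i) :
    T ∈ rainbow W C.col i := by
  rw [mem_powersetCard] at hT
  rw [mem_rainbow] at hJ ⊢
  exact ⟨⟨hT.1.trans hJ.1.1, hT.2⟩, hJ.2.mono hT.1⟩

theorem card_restrict (hJ : J ∈ rainbow W C.col j) (hM : M ⊆ J.image C.col) :
    #(C.restrict J M) = #M := by
  conv_rhs => rw [← image_restrict hM]
  exact (card_image_of_injOn ((mem_rainbow.1 hJ).2.mono restrict_subset)).symm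

theorem restrict_mem_rainbow (hJ : J ∈ rainbow W C.col j) (hM : M ⊆ J.image C.col) :
    C.restrict J M ∈ rainbow W C.col #M :=
  mem_rainbow_of_mem_powersetCard hJ (mem_powersetCard.2 ⟨restrict_subset, card_restrict hJ hM⟩)

theorem mem_agreeing_self (hJ : J ∈ rainbow W C.col j) : J ∈ C.agreeing J 𝒰 :=
  mem_agreeing.2 ⟨(mem_rainbow.1 hJ).1.2.symm ▸ hJ, rfl, fun _ _ => rfl⟩

theorem agreeing_eq_of_mem (hI : I ∈ C.agreeing J 𝒰) : C.agreeing I 𝒰 = C.agreeing J 𝒰 := by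
  obtain ⟨hI, himage, hlab⟩ := mem_agreeing.1 hI
  ext S
  rw [mem_agreeing, mem_agreeing, himage, (mem_rainbow.1 hI).1.2]
  refine and_congr_right fun _ => and_congr_right fun _ => forall₂_congr fun M hM => ?_
  rw [hlab M hM]

theorem agreeing_insert : C.agreeing J (insert M 𝒰) =
    {I ∈ C.agreeing J 𝒰 | C.lab (C.restrict I M) = C.lab (C.restrict J M)} := by
  ext I
  simp only [mem_filter, mem_agreeing, forall_mem_insert]
  tauto

/-- The clique set of the polyad of `J` in the family of partitions induced by `C`. -/
def polyCliques (C : LabelledColoring W) (J : Finset V) : Finset (Finset V) :=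
  C.agreeing J (J.image C.col).ssubsets

theorem agreeing_powerset :
    C.agreeing J (J.image C.col).powerset = {I ∈ C.polyCliques J | C.lab I = C.lab J} := by
  rw [← insert_erase (mem_powerset_self _), agreeing_insert]
  refine filter_congr fun I hI => ?_
  rw [restrict_eq_self (mem_agreeing.1 hI).2.1.subset, restrict_eq_self Subset.rfl]

variable [DecidableEq V]

/-- The family of partitions induced by `C`: vertices are classified by their colour, larger sets
by their colours and the labels of all their subsets. -/
def family (C : LabelledColoring W) : PartFam V where
  gnd := W
  vClass v := {u ∈ W | C.col u = C.col v}
  cls _ J := C.agreeing J (J.image C.col).powerset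

theorem vClass_family_eq_iff {u v : V} (hu : u ∈ W) :
    C.family.vClass u = C.family.vClass v ↔ C.col u = C.col v := by
  refine ⟨fun h => ?_, fun h => by simp only [family, h]⟩
  have : u ∈ C.family.vClass v := h ▸ mem_filter.2 ⟨hu, rfl⟩
  exact (mem_filter.1 this).2

theorem cross_family : C.family.cross j = rainbow W C.col j := by
  ext S
  rw [PartFam.mem_cross, mem_rainbow]
  refine and_congr_right fun hS => forall₂_congr fun u hu => forall₂_congr fun v _ => ?_
  rw [vClass_family_eq_iff (C := C) (hS.1 hu)]

theorem part_family (hT : T ∈ rainbow W C.col i) :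
    C.family.part i T = C.agreeing T (T.image C.col).powerset := by
  obtain rfl | hi := eq_or_ne i 1
  · obtain ⟨v, rfl⟩ := card_eq_one.1 (mem_rainbow.1 hT).1.2
    ext S
    simp only [PartFam.part_one, sup_singleton, mem_sing, mem_agreeing, card_singleton]
    constructor
    · rintro ⟨u, hu, rfl⟩
      obtain ⟨huW, huv⟩ := mem_filter.1 hu
      have hcard (w : V) (M : Finset ℕ) : C.lab (C.restrict {w} M) = 0 :=
        C.lab_eq_zero _ ((card_le_card restrict_subset).trans_eq (card_singleton w))
      simp [mem_rainbow, huW, huv, hcard]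
    · rintro ⟨hS, himage, -⟩
      obtain ⟨u, rfl⟩ := card_eq_one.1 (mem_rainbow.1 hS).1.2
      rw [image_singleton, image_singleton, singleton_inj] at himage
      exact ⟨u, mem_filter.2 ⟨singleton_subset_iff.1 (mem_rainbow.1 hS).1.1, himage⟩, rfl⟩
  · rw [PartFam.part, if_neg hi, family]

theorem mem_polyCliques_of_mem_cliqueSets (hj : 2 ≤ j) (hJ : J ∈ rainbow W C.col j)
    (hI : I ∈ cliqueSets (rainbow W C.col j) (j - 1) (C.family.polyad (j - 1) J)) :
    I ∈ C.polyCliques J := by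
  obtain ⟨hIr, hI⟩ := mem_cliqueSets.1 hI
  have hpart : ∀ T ∈ I.powersetCard (j - 1), ∃ T' ∈ J.powersetCard (j - 1),
      T ∈ C.agreeing T' (T'.image C.col).powerset := fun T hT => by
    obtain ⟨T', hT', hTT'⟩ := PartFam.mem_polyad.1 (hI T hT)
    exact ⟨T', hT', part_family (mem_rainbow_of_mem_powersetCard hJ hT') ▸ hTT'⟩
  have himage : I.image C.col = J.image C.col := by
    refine eq_of_subset_of_card_le (image_subset_iff.2 fun v hv => ?_)
      (by rw [card_image_of_mem_rainbow hIr, card_image_of_mem_rainbow hJ])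
    have hcard := (mem_rainbow.1 hIr).1.2
    obtain ⟨T, hvT, hTI, hT⟩ := exists_subsuperset_card_eq (singleton_subset_iff.2 hv)
      (n := j - 1) (by rw [card_singleton]; lia) (by lia)
    obtain ⟨T', hT', hTT'⟩ := hpart T (mem_powersetCard.2 ⟨hTI, hT⟩)
    refine image_subset_image (mem_powersetCard.1 hT').1 ?_
    rw [← (mem_agreeing.1 hTT').2.1]
    exact mem_image_of_mem _ (singleton_subset_iff.1 hvT)
  refine mem_agreeing.2 ⟨(mem_rainbow.1 hJ).1.2.symm ▸ hIr, himage, fun M hM => ?_⟩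
  obtain ⟨c, hc, hcM⟩ := exists_of_ssubset (mem_ssubsets.1 hM)
  have hN : (J.image C.col).erase c ⊆ J.image C.col := erase_subset _ _
  have hMN : M ⊆ (J.image C.col).erase c := subset_erase.2 ⟨(mem_ssubsets.1 hM).1, hcM⟩
  obtain ⟨T', hT', hTT'⟩ := hpart (C.restrict I ((J.image C.col).erase c))
    (mem_powersetCard.2 ⟨restrict_subset, by
      rw [card_restrict hIr (himage ▸ hN), card_erase_of_mem hc, card_image_of_mem_rainbow hJ]⟩)
  obtain ⟨-, hT'image, hlab⟩ := mem_agreeing.1 hTT'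
  rw [image_restrict (himage ▸ hN)] at hT'image
  have hT'J : C.restrict J ((J.image C.col).erase c) = T' := by
    rw [hT'image, restrict_image (mem_rainbow.1 hJ).2 (mem_powersetCard.1 hT').1]
  rw [← restrict_restrict hMN, ← restrict_restrict (S := J) hMN, hT'J]
  exact hlab M (mem_powerset.2 (hT'image ▸ hMN))

theorem mem_cliqueSets_of_mem_polyCliques (hj : 2 ≤ j) (hJ : J ∈ rainbow W C.col j)
    (hI : I ∈ C.polyCliques J) :
    I ∈ cliqueSets (rainbow W C.col j) (j - 1) (C.family.polyad (j - 1) J) := by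
  obtain ⟨hIr, himage, hlab⟩ := mem_agreeing.1 hI
  rw [(mem_rainbow.1 hJ).1.2] at hIr
  refine mem_cliqueSets.2 ⟨hIr, fun T hT => ?_⟩
  have hTr := mem_rainbow_of_mem_powersetCard hIr hT
  have hN : T.image C.col ⊆ J.image C.col := himage ▸ image_subset_image (mem_powersetCard.1 hT).1
  have hT'r := restrict_mem_rainbow hJ hN
  have hTI := restrict_image (mem_rainbow.1 hIr).2 (mem_powersetCard.1 hT).1
  have hNj := card_image_of_mem_rainbow hTr
  rw [hNj] at hT'r
  refine PartFam.mem_polyad.2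
    ⟨C.restrict J (T.image C.col),
      mem_powersetCard.2 ⟨restrict_subset, (mem_rainbow.1 hT'r).1.2⟩, ?_⟩
  rw [part_family hT'r, mem_agreeing, image_restrict hN, (mem_rainbow.1 hT'r).1.2]
  refine ⟨hTr, rfl, fun M hM => ?_⟩
  rw [mem_powerset] at hM
  rw [restrict_restrict hM]
  conv_lhs => rw [← hTI, restrict_restrict hM]
  refine hlab M (mem_ssubsets.2 ⟨hM.trans hN, fun h => ?_⟩)
  have := card_le_card (h.trans hM)
  rw [card_image_of_mem_rainbow hJ, hNj] at this
  lia

theorem polyad_family_subset (hJ : J ∈ rainbow W C.col j) :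
    C.family.polyad i J ⊆ C.family.cross i := fun S hS => by
  obtain ⟨T, hT, hS⟩ := PartFam.mem_polyad.1 hS
  rw [part_family (mem_rainbow_of_mem_powersetCard hJ hT), mem_agreeing,
    (mem_powersetCard.1 hT).2] at hS
  rw [cross_family]
  exact hS.1

theorem polyCliques_family (hj : 2 ≤ j) (hJ : J ∈ rainbow W C.col j) :
    C.family.polyCliques j J = C.polyCliques J := by
  rw [PartFam.polyCliques, PartFam.KsetC_eq_cliqueSets hj (polyad_family_subset hJ), cross_family]
  ext I
  exact ⟨mem_polyCliques_of_mem_cliqueSets hj hJ, mem_cliqueSets_of_mem_polyCliques hj hJ⟩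

theorem cls_family : C.family.cls j J = {I ∈ C.polyCliques J | C.lab I = C.lab J} :=
  agreeing_powerset

theorem isFamily_family (hk : k ≤ b 1) (hcol : #(W.image C.col) = b 1)
    (hlab : ∀ j, 2 ≤ j → j ≤ k - 1 → ∀ J ∈ rainbow W C.col j,
      #((C.polyCliques J).image C.lab) = b j) :
    C.family.IsFamily k b := by
  refine ⟨fun v hv => mem_filter.2 ⟨hv, rfl⟩, fun v _ => filter_subset _ _, fun u hu v _ h =>
    (vClass_family_eq_iff hu).2 (mem_filter.1 h).2, (card_image_fiber W C.col).trans hcol, hk,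
    fun j hj hjk => ?_⟩
  rw [cross_family]
  refine ⟨fun J hJ => mem_agreeing_self hJ, fun J _ I hI => ?_, fun J hJ => ?_, fun J hJ => ?_,
    fun J hJ => ?_⟩
  · have himage := (mem_agreeing.1 hI).2.1
    simp only [family, himage]
    exact agreeing_eq_of_mem hI
  · rw [polyCliques_family hj hJ, cls_family]
    exact filter_subset _ _
  · rw [polyCliques_family hj hJ]
    exact fun I hI => (mem_rainbow.1 hJ).1.2 ▸ (mem_agreeing.1 hI).1
  · rw [polyCliques_family hj hJ, ← hlab j hj hjk J hJ,
      ← card_image_fiber (C.polyCliques J) C.lab]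
    refine congrArg _ (image_congr fun I hI => ?_)
    rw [mem_coe] at hI
    rw [cls_family, polyCliques, (mem_agreeing.1 hI).2.1, agreeing_eq_of_mem hI, ← polyCliques]

end LabelledColoring

end LabelledColorings

section Counting

theorem abs_card_sub_card_div_le_of_fibers {α β : Type*} [DecidableEq β] {s t : Finset α}
    {f : α → β} {P : Finset β} (hs : ∀ x ∈ s, f x ∈ P) (ht : ∀ x ∈ t, f x ∈ P) {m : ℕ} {e : ℝ}
    (h : ∀ y ∈ P, |(#{x ∈ s | f x = y} : ℝ) - #{x ∈ t | f x = y} / m| ≤ e) :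
    |(#s : ℝ) - #t / m| ≤ #P * e := by
  rw [card_eq_sum_card_fiberwise hs, card_eq_sum_card_fiberwise ht, Nat.cast_sum, Nat.cast_sum,
    sum_div, ← sum_sub_distrib, ← nsmul_eq_mul]
  exact (abs_sum_le_sum_abs _ _).trans (sum_le_card_nsmul _ _ _ h)

variable {V : Type*}

namespace LabelledColoring

variable {W I J X : Finset V} {C : LabelledColoring W} {M : Finset ℕ} {𝒰 : Finset (Finset ℕ)}
  {j k ℓ s t : ℕ} {b : ℕ → ℕ} {δ : ℝ}

/-- The set of vertices of `S` whose colour is not in `M`. -/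
def remove (C : LabelledColoring W) (S : Finset V) (M : Finset ℕ) : Finset V :=
  {v ∈ S | C.col v ∉ M}

theorem disjoint_restrict_remove (S T : Finset V) (M : Finset ℕ) :
    Disjoint (C.restrict S M) (C.remove T M) :=
  disjoint_left.2 fun _ hS hT => (mem_filter.1 hT).2 (mem_filter.1 hS).2

theorem restrict_mem_polyCliques (hJ : J ∈ rainbow W C.col j) (hM : M ⊆ J.image C.col)
    (hsub : M.ssubsets ⊆ 𝒰) (hI : I ∈ C.agreeing J 𝒰) :
    C.restrict I M ∈ C.polyCliques (C.restrict J M) := by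
  obtain ⟨hIr, himage, hlab⟩ := mem_agreeing.1 hI
  rw [polyCliques, mem_agreeing, card_restrict hJ hM, image_restrict hM,
    image_restrict (himage ▸ hM)]
  refine ⟨restrict_mem_rainbow hIr (himage ▸ hM), rfl, fun D hD => ?_⟩
  have hDM := (mem_ssubsets.1 hD).1
  rw [restrict_restrict hDM, restrict_restrict hDM, hlab D (hsub hD)]

theorem pow_le_card_agreeing_empty (hJ : J ∈ rainbow W C.col j)
    (hs : ∀ v ∈ J, s ≤ #{u ∈ W | C.col u = C.col v}) : s ^ j ≤ #(C.agreeing J ∅) := by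
  classical
  obtain ⟨⟨-, hJj⟩, hJinj⟩ := mem_rainbow.1 hJ
  set A := Fintype.piFinset fun v : J => {u ∈ W | C.col u = C.col v}
  have hcol : ∀ f ∈ A, C.col ∘ f = C.col ∘ Subtype.val := fun f hf =>
    funext fun v => (mem_filter.1 (Fintype.mem_piFinset.1 hf v)).2
  calc s ^ j ≤ ∏ v : J, #{u ∈ W | C.col u = C.col v} := by
        rw [← hJj, ← card_attach, ← univ_eq_attach, ← prod_const]
        exact prod_le_prod' fun v _ => hs v v.2
    _ = #A := (Fintype.card_piFinset _).symm
    _ ≤ #(C.agreeing J ∅) := card_le_card_of_injOn (univ.image ·) (fun f hf => ?_) ?_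
  · have hinj : Function.Injective (C.col ∘ f) := hcol f hf ▸ hJinj.injective
    have himage : (univ.image f).image C.col = J.image C.col := by
      rw [image_image, hcol f hf, ← image_image, univ_eq_attach, attach_image_val]
    have hcard : #(univ.image f) = #J := by
      rw [card_image_of_injective _ hinj.of_comp, univ_eq_attach, card_attach]
    refine mem_agreeing.2 ⟨mem_filter.2 ⟨mem_powersetCard.2 ⟨image_subset_iff.2 fun v _ =>
      (mem_filter.1 (Fintype.mem_piFinset.1 hf v)).1, hcard⟩, ?_⟩, himage, by simp⟩
    rw [himage, hcard, card_image_of_injOn hJinj]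
  · intro f hf g hg hfg
    funext v
    obtain ⟨u, -, hu⟩ := mem_image.1 (hfg.subset (mem_image_of_mem f (mem_univ v)))
    have huv : u = v := Subtype.ext (hJinj u.2 v.2 (by
      have := congrArg C.col hu
      rwa [← Function.comp_apply (f := C.col), ← Function.comp_apply (f := C.col) (g := f),
        hcol f hf, hcol g hg] at this))
    rw [← hu, huv]

variable [DecidableEq V]

theorem restrict_union_remove (S : Finset V) (M : Finset ℕ) :
    C.restrict S M ∪ C.remove S M = S :=
  filter_union_filter_not_eq _ S

theorem restrict_union (S T : Finset V) (M : Finset ℕ) :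
    C.restrict (S ∪ T) M = C.restrict S M ∪ C.restrict T M :=
  filter_union _ _ _

theorem restrict_union_remove_eq (hX : X.image C.col = M) :
    C.restrict (X ∪ C.remove J M) M = X := by
  have hJ : C.restrict (C.remove J M) M = ∅ :=
    filter_false_of_mem fun _ hv => (mem_filter.1 hv).2
  rw [restrict_union, restrict_eq_self hX.subset, hJ, union_empty]

theorem remove_union_remove_eq (hX : X.image C.col = M) :
    C.remove (X ∪ C.remove J M) M = C.remove J M := by
  have hXM : C.remove X M = ∅ :=
    filter_false_of_mem fun v hv => not_not.2 (hX.subset (mem_image_of_mem _ hv))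
  have hJM : C.remove (C.remove J M) M = C.remove J M :=
    filter_true_of_mem fun _ hv => (mem_filter.1 hv).2
  rw [remove, filter_union, ← remove, ← remove, hXM, hJM, empty_union]

theorem union_remove_mem_agreeing_empty (hJ : J ∈ rainbow W C.col j) (hM : M ⊆ J.image C.col)
    (hX : X ∈ rainbow W C.col #M) (hXM : X.image C.col = M) :
    X ∪ C.remove J M ∈ rainbow W C.col j ∧ (X ∪ C.remove J M).image C.col = J.image C.col := by
  have himage : (X ∪ C.remove J M).image C.col = J.image C.col := by
    conv_rhs => rw [← restrict_union_remove (C := C) J M]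
    rw [image_union, image_union, hXM, image_restrict hM]
  have hcard : #(X ∪ C.remove J M) = #J := by
    conv_rhs => rw [← restrict_union_remove (C := C) J M]
    rw [← restrict_eq_self hXM.subset, card_union_of_disjoint (disjoint_restrict_remove _ _ _),
      card_union_of_disjoint (disjoint_restrict_remove _ _ _), restrict_eq_self hXM.subset,
      card_restrict hJ hM, (mem_rainbow.1 hX).1.2]
  obtain ⟨⟨hJW, hJj⟩, -⟩ := mem_rainbow.1 hJ
  refine ⟨mem_filter.2 ⟨mem_powersetCard.2 ⟨union_subset (mem_rainbow.1 hX).1.1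
    ((filter_subset _ _).trans hJW), hcard.trans hJj⟩, ?_⟩, himage⟩
  rw [himage, hcard, card_image_of_mem_rainbow hJ, hJj]

/-- The `(#M - 1)`-sets `T` that meet every condition defining `agreeing J 𝒰` which, once the
vertices of `J` with colours outside `M` are fixed, involves no vertex outside `T`. -/
def linkGraph (C : LabelledColoring W) (J : Finset V) (M : Finset ℕ) (𝒰 : Finset (Finset ℕ)) :
    Finset (Finset V) :=
  {T ∈ W.powersetCard (#M - 1) | ∀ N ∈ 𝒰, N ∩ M ⊆ T.image C.col →
    C.lab (C.restrict (T ∪ C.remove J M) N) = C.lab (C.restrict J N)}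

theorem restrict_union_remove_congr {T : Finset V} {N : Finset ℕ} (hX : Set.InjOn C.col X)
    (hXM : X.image C.col = M) (hT : T ⊆ X) (hN : N ∩ M ⊆ T.image C.col) :
    C.restrict (T ∪ C.remove J M) N = C.restrict (X ∪ C.remove J M) N := by
  rw [restrict_union, restrict_union]
  congr 1
  refine (filter_subset_filter _ hT).antisymm fun v hv => ?_
  obtain ⟨hvX, hvN⟩ := mem_restrict.1 hv
  obtain ⟨u, hu, huv⟩ := mem_image.1
    (hN (mem_inter.2 ⟨hvN, hXM.subset (mem_image_of_mem _ hvX)⟩))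
  exact mem_restrict.2 ⟨hX (hT hu) hvX huv ▸ hu, hvN⟩

theorem union_remove_mem_agreeing_iff (hJ : J ∈ rainbow W C.col j) (hM : M ⊆ J.image C.col)
    (h𝒰 : ∀ N ∈ 𝒰, ¬ M ⊆ N) (hX : X ∈ rainbow W C.col #M) (hXM : X.image C.col = M) :
    X ∪ C.remove J M ∈ C.agreeing J 𝒰 ↔ ∀ T ∈ X.powersetCard (#M - 1), T ∈ C.linkGraph J M 𝒰 := by
  obtain ⟨hr, himage⟩ := union_remove_mem_agreeing_empty hJ hM hX hXM
  obtain ⟨⟨hXW, -⟩, hinj⟩ := mem_rainbow.1 hX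
  rw [mem_agreeing, (mem_rainbow.1 hJ).1.2, and_iff_right hr, and_iff_right himage]
  constructor
  · intro hlab T hT
    obtain ⟨hTX, hTcard⟩ := mem_powersetCard.1 hT
    refine mem_filter.2 ⟨mem_powersetCard.2 ⟨hTX.trans hXW, hTcard⟩, fun N hN hNT => ?_⟩
    rw [restrict_union_remove_congr hinj hXM hTX hNT, hlab N hN]
  · intro hlink N hN
    obtain ⟨c, hc, hcN⟩ := not_subset.1 (h𝒰 N hN)
    have herase : M.erase c ⊆ X.image C.col := hXM.symm ▸ erase_subset c M
    have hNM : N ∩ M ⊆ (C.restrict X (M.erase c)).image C.col := by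
      rw [image_restrict herase]
      exact subset_erase.2 ⟨inter_subset_right, fun h => hcN (mem_inter.1 h).1⟩
    have hT := hlink (C.restrict X (M.erase c)) (mem_powersetCard.2 ⟨restrict_subset, by
      rw [card_restrict hX herase, card_erase_of_mem hc]⟩)
    rw [← restrict_union_remove_congr hinj hXM restrict_subset hNM]
    exact (mem_filter.1 hT).2 N hN hNM

theorem card_filter_remove_eq (hJ : J ∈ rainbow W C.col j) (hM : M ⊆ J.image C.col)
    (h𝒰 : ∀ N ∈ 𝒰, ¬ M ⊆ N) (hsub : M.ssubsets ⊆ 𝒰) (p : Finset V → Prop) [DecidablePred p] :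
    #{I ∈ {I ∈ C.agreeing J 𝒰 | p (C.restrict I M)} | C.remove I M = C.remove J M} =
      #(cliqueSets {X ∈ C.polyCliques (C.restrict J M) | p X} (#M - 1) (C.linkGraph J M 𝒰)) := by
  have hpoly : ∀ X ∈ C.polyCliques (C.restrict J M),
      X ∈ rainbow W C.col #M ∧ X.image C.col = M := fun X hX => by
    rw [polyCliques, mem_agreeing, card_restrict hJ hM, image_restrict hM] at hX
    exact ⟨hX.1, hX.2.1⟩
  refine card_nbij' (fun I => C.restrict I M) (fun X => X ∪ C.remove J M) ?_ ?_ ?_ ?_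
  · simp only [Set.MapsTo, mem_coe, mem_filter, mem_cliqueSets]
    rintro I ⟨⟨hI, hpI⟩, hIJ⟩
    have hX := restrict_mem_polyCliques hJ hM hsub hI
    obtain ⟨hXr, hXM⟩ := hpoly _ hX
    refine ⟨⟨hX, hpI⟩, (union_remove_mem_agreeing_iff hJ hM h𝒰 hXr hXM).1 ?_⟩
    rwa [← hIJ, restrict_union_remove]
  · simp only [Set.MapsTo, mem_coe, mem_filter, mem_cliqueSets]
    rintro X ⟨⟨hX, hpX⟩, hlink⟩
    obtain ⟨hXr, hXM⟩ := hpoly X hX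
    rw [restrict_union_remove_eq hXM, remove_union_remove_eq hXM]
    exact ⟨⟨(union_remove_mem_agreeing_iff hJ hM h𝒰 hXr hXM).2 hlink, hpX⟩, rfl⟩
  · intro I hI
    simp only [mem_coe, mem_filter] at hI
    simp only [← hI.2, restrict_union_remove]
  · intro X hX
    simp only [mem_coe, mem_cliqueSets, mem_filter] at hX
    exact restrict_union_remove_eq (hpoly X hX.1.1).2

/-- All labels of `j`-sets, `2 ≤ j ≤ k - 1`, are less than `b j`, and each label occurs evenly in
the clique set of every polyad. -/
def IsBalanced (C : LabelledColoring W) (k : ℕ) (b : ℕ → ℕ) (δ : ℝ) : Prop :=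
  ∀ j, 2 ≤ j → j ≤ k - 1 → ∀ J ∈ rainbow W C.col j, C.lab J < b j ∧ ∀ ℓ < b j,
    IsEvenPart (j - 1) (b j) (δ * (#W : ℝ) ^ j) {S ∈ C.polyCliques J | C.lab S = ℓ}
      (C.polyCliques J)

theorem IsBalanced.abs_card_filter_lab_sub_le (hC : C.IsBalanced k b δ)
    (hJ : J ∈ rainbow W C.col j) (hM : M ⊆ J.image C.col) (hM2 : 2 ≤ #M) (hMk : #M ≤ k - 1)
    (h𝒰 : ∀ N ∈ 𝒰, ¬ M ⊆ N) (hsub : M.ssubsets ⊆ 𝒰) (hℓ : ℓ < b #M) :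
    |(#{I ∈ C.agreeing J 𝒰 | C.lab (C.restrict I M) = ℓ} : ℝ) - #(C.agreeing J 𝒰) / b #M| ≤
      δ * (#W : ℝ) ^ j := by
  have hfiber : ∀ Y ∈ (C.agreeing J 𝒰).image (C.remove · M),
      |(#{I ∈ {I ∈ C.agreeing J 𝒰 | C.lab (C.restrict I M) = ℓ} | C.remove I M = Y} : ℝ) -
        #{I ∈ C.agreeing J 𝒰 | C.remove I M = Y} / b #M| ≤ δ * (#W : ℝ) ^ #M := fun Y hY => by
    obtain ⟨I₀, hI₀, rfl⟩ := mem_image.1 hY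
    rw [← agreeing_eq_of_mem hI₀]
    obtain ⟨hI₀, himage, -⟩ := mem_agreeing.1 hI₀
    have hM := himage ▸ hM
    have htrue := card_filter_remove_eq hI₀ hM h𝒰 hsub (fun _ => True)
    simp only [filter_true] at htrue
    rw [card_filter_remove_eq hI₀ hM h𝒰 hsub (C.lab · = ℓ), htrue]
    exact (hC #M hM2 hMk _ (restrict_mem_rainbow hI₀ hM)).2 ℓ hℓ _
  have hδ : 0 ≤ δ * (#W : ℝ) ^ #M :=
    (abs_nonneg _).trans (hfiber _ (mem_image_of_mem _ (mem_agreeing_self hJ)))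
  have hP : #((C.agreeing J 𝒰).image (C.remove · M)) ≤ #W ^ (j - #M) := by
    refine (card_le_card (image_subset_iff.2 fun I hI => mem_powersetCard.2 ?_)).trans
      ((card_powersetCard _ _).trans_le (Nat.choose_le_pow _ _))
    obtain ⟨hIr, himage, -⟩ := mem_agreeing.1 hI
    rw [(mem_rainbow.1 hJ).1.2] at hIr
    have hcard := congrArg card (restrict_union_remove (C := C) I M)
    rw [card_union_of_disjoint (disjoint_restrict_remove _ _ _), card_restrict hIr (himage ▸ hM),
      (mem_rainbow.1 hIr).1.2] at hcard
    exact ⟨(filter_subset _ _).trans (mem_rainbow.1 hIr).1.1, Nat.eq_sub_of_add_eq' hcard⟩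
  calc _ ≤ #((C.agreeing J 𝒰).image (C.remove · M)) * (δ * (#W : ℝ) ^ #M) :=
        abs_card_sub_card_div_le_of_fibers
          (fun I hI => mem_image_of_mem _ (filter_subset _ _ hI)) (fun I => mem_image_of_mem _)
          hfiber
    _ ≤ (#W : ℝ) ^ (j - #M) * (δ * (#W : ℝ) ^ #M) := by gcongr; exact_mod_cast hP
    _ = δ * (#W : ℝ) ^ j := by
      rw [mul_left_comm, ← pow_add, Nat.sub_add_cancel]
      exact (card_le_card hM).trans_eq (card_image_of_mem_rainbow hJ)

theorem IsBalanced.le_card_agreeing_insert (hC : C.IsBalanced k b δ) (hδ : 0 ≤ δ) (ht : 0 < t)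
    (hb : ∀ j, 2 ≤ j → j ≤ k - 1 → b j ≤ t) (hJ : J ∈ rainbow W C.col j)
    (hM : M ⊆ J.image C.col) (hMk : #M ≤ k - 1) (h𝒰 : ∀ N ∈ 𝒰, ¬ M ⊆ N)
    (hsub : M.ssubsets ⊆ 𝒰) :
    #(C.agreeing J 𝒰) / t - δ * (#W : ℝ) ^ j ≤ #(C.agreeing J (insert M 𝒰)) := by
  have he : 0 ≤ δ * (#W : ℝ) ^ j := by positivity
  rw [agreeing_insert]
  obtain hM1 | hM2 := Nat.lt_or_ge #M 2
  · have hlab : ∀ I ∈ C.agreeing J 𝒰, C.lab (C.restrict I M) = C.lab (C.restrict J M) :=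
      fun I hI => by
        obtain ⟨hIr, himage, -⟩ := mem_agreeing.1 hI
        rw [C.lab_eq_zero _ ((card_restrict hIr (himage ▸ hM)).trans_le (by lia)),
          C.lab_eq_zero _ ((card_restrict hJ hM).trans_le (by lia))]
    rw [filter_true_of_mem hlab]
    have : (#(C.agreeing J 𝒰) : ℝ) / t ≤ #(C.agreeing J 𝒰) :=
      div_le_self (by positivity) (by exact_mod_cast ht)
    linarith
  · have hlt := (hC #M hM2 hMk _ (restrict_mem_rainbow hJ hM)).1
    have hbpos : (0 : ℝ) < b #M := by exact_mod_cast Nat.zero_lt_of_lt hlt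
    have hdiv : (#(C.agreeing J 𝒰) : ℝ) / t ≤ #(C.agreeing J 𝒰) / b #M := by
      gcongr
      exact hb _ hM2 hMk
    linarith [(abs_le.1 (hC.abs_card_filter_lab_sub_le hJ hM hM2 hMk h𝒰 hsub hlt)).1]

theorem IsBalanced.le_card_agreeing (hC : C.IsBalanced k b δ) (hδ : 0 ≤ δ) (ht : 0 < t)
    (hb : ∀ j, 2 ≤ j → j ≤ k - 1 → b j ≤ t) (hJ : J ∈ rainbow W C.col j)
    (hs : ∀ v ∈ J, s ≤ #{u ∈ W | C.col u = C.col v})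
    (h𝒰 : IsLowerSet (𝒰 : Set (Finset ℕ))) (h𝒰J : ∀ M ∈ 𝒰, M ⊆ J.image C.col ∧ #M ≤ k - 1) :
    (s : ℝ) ^ j / t ^ #𝒰 - #𝒰 * (δ * (#W : ℝ) ^ j) ≤ #(C.agreeing J 𝒰) := by
  have ht1 : (1 : ℝ) ≤ t := by exact_mod_cast ht
  induction 𝒰 using Finset.induction_on_max_value (fun M : Finset ℕ => #M) with
  | empty => simpa using (by exact_mod_cast pow_le_card_agreeing_empty hJ hs : (s : ℝ) ^ j ≤ _)
  | insert M 𝒰 hM hmax ih =>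
    have h𝒰M : ∀ N ∈ 𝒰, ¬ M ⊆ N := fun N hN h => hM (eq_of_subset_of_card_le h (hmax N hN) ▸ hN)
    have hlower : IsLowerSet (𝒰 : Set (Finset ℕ)) := fun N D hDN hN =>
      mem_of_mem_insert_of_ne (h𝒰 hDN (mem_insert_of_mem hN)) fun h => h𝒰M N hN (h ▸ hDN)
    have hsub : M.ssubsets ⊆ 𝒰 := fun D hD => mem_of_mem_insert_of_ne
      (h𝒰 (mem_ssubsets.1 hD).1 (mem_insert_self M 𝒰)) (mem_ssubsets.1 hD).ne
    obtain ⟨hMJ, hMk⟩ := h𝒰J M (mem_insert_self M 𝒰)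
    refine le_trans ?_ (hC.le_card_agreeing_insert hδ ht hb hJ hMJ hMk h𝒰M hsub)
    calc (s : ℝ) ^ j / t ^ #(insert M 𝒰) - #(insert M 𝒰) * (δ * (#W : ℝ) ^ j)
        = s ^ j / t ^ #𝒰 / t - #𝒰 * (δ * (#W : ℝ) ^ j) - δ * (#W : ℝ) ^ j := by
          rw [card_insert_of_notMem hM, Nat.cast_add_one, pow_succ, div_div]
          ring
      _ ≤ s ^ j / t ^ #𝒰 / t - #𝒰 * (δ * (#W : ℝ) ^ j) / t - δ * (#W : ℝ) ^ j := by
          gcongr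
          exact div_le_self (by positivity) ht1
      _ = (s ^ j / t ^ #𝒰 - #𝒰 * (δ * (#W : ℝ) ^ j)) / t - δ * (#W : ℝ) ^ j := by rw [sub_div]
      _ ≤ #(C.agreeing J 𝒰) / t - δ * (#W : ℝ) ^ j := by
          gcongr
          exact ih hlower fun N hN => h𝒰J N (mem_insert_of_mem hN)

theorem IsBalanced.le_card_polyCliques (hC : C.IsBalanced k b δ) (hδ : 0 ≤ δ) (ht : 0 < t)
    (hb : ∀ j, 2 ≤ j → j ≤ k - 1 → b j ≤ t) (hjk : j ≤ k) (hJ : J ∈ rainbow W C.col j)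
    (hs : ∀ v ∈ J, s ≤ #{u ∈ W | C.col u = C.col v}) :
    (s : ℝ) ^ j / t ^ 2 ^ j - 2 ^ j * (δ * (#W : ℝ) ^ j) ≤ #(C.polyCliques J) := by
  have hJj := card_image_of_mem_rainbow hJ
  have hcard : #(J.image C.col).ssubsets ≤ 2 ^ j :=
    (card_le_card (erase_subset _ _)).trans_eq (by rw [card_powerset, hJj])
  refine le_trans ?_ (hC.le_card_agreeing hδ ht hb hJ hs (fun M D hDM hM => ?_) fun M hM => ?_)
  · gcongr
    · exact_mod_cast ht
    · exact_mod_cast hcard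
  · rw [mem_coe, mem_ssubsets] at hM ⊢
    exact lt_of_le_of_lt hDM hM
  · have hMJ := mem_ssubsets.1 hM
    have := hJj ▸ card_lt_card hMJ
    exact ⟨hMJ.1, by lia⟩

end LabelledColoring

end Counting

section RefiningLabels

variable {V : Type*} [DecidableEq V]

/-- A labelling `χ` by `0, …, m - 1` of the `P`-crossing `j`-sets and of a further family `A` of
`j`-sets. It refines the partition `P.cls j`, and its label classes are even parts of every clique
set `P.polyCliques j J` and of `A`. -/
structure IsEvenLabelling (P : PartFam V) (j m : ℕ) (e : ℝ) (A : Finset (Finset V))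
    (χ : Finset V → ℕ) : Prop where
  lt : ∀ S ∈ P.cross j ∪ A, χ S < m
  cls_eq : ∀ J ∈ P.cross j, ∀ I ∈ P.polyCliques j J, χ I = χ J → P.cls j I = P.cls j J
  isEvenPart_polyCliques : ∀ J ∈ P.cross j, ∀ ℓ < m,
    IsEvenPart (j - 1) m e {S ∈ P.polyCliques j J | χ S = ℓ} (P.polyCliques j J)
  isEvenPart : ∀ ℓ < m, IsEvenPart (j - 1) m e {S ∈ A | χ S = ℓ} A

variable {P : PartFam V} {j k m d : ℕ} {a b : ℕ → ℕ} {e ε δ : ℝ} {A : Finset (Finset V)}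
  {χ χ' : Finset V → ℕ}

theorem IsEvenLabelling.congr (h : IsEvenLabelling P j m e A χ) (hP : P.IsFamily k a)
    (hj : 2 ≤ j) (hjk : j ≤ k) (hχ : ∀ S ∈ P.cross j ∪ A, χ' S = χ S) :
    IsEvenLabelling P j m e A χ' := by
  have hcross : ∀ J ∈ P.cross j, χ' J = χ J := fun J hJ => hχ J (mem_union_left _ hJ)
  have hpoly : ∀ J ∈ P.cross j, ∀ I ∈ P.polyCliques j J, χ' I = χ I := fun J hJ I hI =>
    hcross I (hP.polyCliques_subset_cross hj hjk hJ hI)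
  refine ⟨fun S hS => hχ S hS ▸ h.lt S hS, fun J hJ I hI hIJ => h.cls_eq J hJ I hI ?_,
    fun J hJ ℓ hℓ => ?_, fun ℓ hℓ => ?_⟩
  · rwa [← hpoly J hJ I hI, ← hcross J hJ]
  · rw [filter_congr fun I hI => by rw [hpoly J hJ I hI]]
    exact h.isEvenPart_polyCliques J hJ ℓ hℓ
  · rw [filter_congr fun S hS => by rw [hχ S (mem_union_right _ hS)]]
    exact h.isEvenPart ℓ hℓ

namespace PartFam.IsFamily

/- The label of a crossing set is the index of its class followed by a colour from a balanced
colouring of that class. -/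
theorem exists_isEvenLabelling_cross (hP : P.IsFamily k a) (hreg : P.PolyadReg k a ε)
    (hε0 : 0 < ε) (hε1 : ε ≤ 1) (hj : 2 ≤ j) (hjk : j ≤ k - 1) (hd : 0 < d)
    (hn : (2 * d + 1) * 4 / ε ^ 2 ≤ #P.gnd) :
    ∃ χ, IsEvenLabelling P j (a j * d) (2 * ε * (#P.gnd : ℝ) ^ j) ∅ χ := by
  obtain ⟨idx, hidx⟩ := hP.exists_classIndex hj hjk
  have hpoly : ∀ J ∈ P.cross j, ∀ I ∈ P.polyCliques j J, I ∈ P.cross j :=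
    fun J hJ => hP.polyCliques_subset_cross hj (by lia) hJ
  have hcls : ∀ J ∈ P.cross j, P.cls j J ⊆ P.gnd.powersetCard j := fun J hJ =>
    ((hP.cls_subset_polyCliques hj hjk hJ).trans (hpoly J hJ)).trans cross_subset_powersetCard
  choose! color hcolor_lt hcolor using fun H (hH : H ⊆ P.gnd.powersetCard j) =>
    exists_coloring_isEvenPart hε0 hε1 (by lia) hd hn hH
  have hlt : ∀ J ∈ P.cross j, color (P.cls j J) J < d := fun J hJ => hcolor_lt _ (hcls J hJ) J
  refine ⟨fun S => d * idx S + color (P.cls j S) S, fun S hS => ?_, fun J hJ I hI h => ?_,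
    fun J hJ ℓ hℓ => ?_, fun ℓ _ => ?_⟩
  · rw [union_empty] at hS
    exact mul_add_lt_mul (hlt S hS) (hidx S hS).1
  · rw [mul_add_eq_iff_div_mod (hlt I (hpoly J hJ I hI))] at h
    exact (hidx J hJ).2.1 I hI (h.1.trans ((mul_add_eq_iff_div_mod (hlt J hJ)).1 rfl).1.symm)
  · obtain ⟨J₀, hJ₀, hcls₀⟩ := (hidx J hJ).2.2 (ℓ / d) ((Nat.div_lt_iff_lt_mul hd).2 hℓ)
    have hJ₀c := hpoly J hJ J₀ hJ₀
    have hclass : {S ∈ P.polyCliques j J | d * idx S + color (P.cls j S) S = ℓ} =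
        {S ∈ P.cls j J₀ | color (P.cls j J₀) S = ℓ % d} := by
      rw [← hcls₀, filter_filter]
      refine filter_congr fun S hS => ?_
      rw [mul_add_eq_iff_div_mod (hlt S (hpoly J hJ S hS)), hcls₀]
      refine and_congr_right fun hSp => ?_
      rw [hP.cls_eq_of_mem hj hjk hJ₀c (hcls₀ ▸ mem_filter.2 ⟨hS, hSp⟩)]
    have heven := hP.isEvenPart_cls hε0.le hreg hj hjk hJ₀c
    rw [hP.polyCliques_eq_of_mem_polyCliques hj (by lia) hJ hJ₀] at heven
    rw [hclass, two_mul, add_mul]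
    exact (hcolor _ (hcls J₀ hJ₀c) _ (Nat.mod_lt ℓ hd)).trans heven
  · have he : 0 ≤ 2 * ε * (#P.gnd : ℝ) ^ j := by positivity
    simpa [IsEvenPart, cliqueSets] using he

theorem exists_isEvenLabelling (hP : P.IsFamily k a) (hreg : P.PolyadReg k a ε)
    (hε0 : 0 < ε) (hε1 : ε ≤ 1) (hj : 2 ≤ j) (hjk : j ≤ k - 1) (hm : 0 < m) (hab : a j ∣ m)
    (hn : (2 * m + 1) * 4 / ε ^ 2 ≤ #P.gnd) (hA : A ⊆ P.gnd.powersetCard j)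
    (hAP : Disjoint A (P.cross j)) :
    ∃ χ, IsEvenLabelling P j m (2 * ε * (#P.gnd : ℝ) ^ j) A χ := by
  obtain ⟨d, rfl⟩ := hab
  have hn' : (2 * d + 1) * 4 / ε ^ 2 ≤ (#P.gnd : ℝ) := by
    refine le_trans ?_ hn
    gcongr
    exact_mod_cast Nat.le_mul_of_pos_left d (Nat.pos_of_mul_pos_right hm)
  obtain ⟨χ, hχ⟩ :=
    hP.exists_isEvenLabelling_cross hreg hε0 hε1 hj hjk (Nat.pos_of_mul_pos_left hm) hn'
  obtain ⟨χA, hχA_lt, hχA⟩ := exists_coloring_isEvenPart hε0 hε1 (by lia) hm hn hA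
  have hχ' := hχ.congr (χ' := fun S => if S ∈ P.cross j then χ S else χA S) hP hj (by lia)
    fun S hS => if_pos (by rwa [union_empty] at hS)
  refine ⟨_, fun S _ => ?_, hχ'.cls_eq, hχ'.isEvenPart_polyCliques, fun ℓ hℓ => ?_⟩
  · by_cases hS : S ∈ P.cross j
    · exact hχ'.lt S (mem_union_left _ hS)
    · rw [if_neg hS]
      exact hχA_lt S
  · rw [filter_congr fun S hS => by rw [if_neg (disjoint_left.1 hAP hS)]]
    exact (hχA ℓ hℓ).mono (by rw [two_mul, add_mul, le_add_iff_nonneg_left]; positivity)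

end PartFam.IsFamily

namespace LabelledColoring

variable {C : LabelledColoring P.gnd} {i : ℕ} {J S T : Finset V}

/-- The vertex colours of `C` refine the vertex classes of `P`, and at every level its labels form
an even labelling of the `P`-crossing sets and of the other rainbow sets. -/
structure IsEvenRefinement (C : LabelledColoring P.gnd) (k : ℕ) (b : ℕ → ℕ) (δ : ℝ) : Prop where
  vClass_eq : ∀ u ∈ P.gnd, ∀ v ∈ P.gnd, C.col u = C.col v → P.vClass u = P.vClass v
  isEvenLabelling : ∀ j, 2 ≤ j → j ≤ k - 1 →
    IsEvenLabelling P j (b j) (δ * (#P.gnd : ℝ) ^ j) (rainbow P.gnd C.col j \ P.cross j) C.lab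

theorem exists_isEvenRefinement (hP : P.IsFamily k a) (hreg : P.PolyadReg k a ε) (hε0 : 0 < ε)
    (hε1 : ε ≤ 1) {col : V → ℕ}
    (hcol : ∀ u ∈ P.gnd, ∀ v ∈ P.gnd, col u = col v → P.vClass u = P.vClass v)
    (hb : ∀ j, 2 ≤ j → j ≤ k - 1 →
      0 < b j ∧ a j ∣ b j ∧ (2 * b j + 1) * 4 / ε ^ 2 ≤ (#P.gnd : ℝ)) :
    ∃ C : LabelledColoring P.gnd, C.col = col ∧ C.IsEvenRefinement k b (2 * ε) := by
  choose! χ hχ using fun j hj hjk =>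
    hP.exists_isEvenLabelling (A := rainbow P.gnd col j \ P.cross j) hreg hε0 hε1 hj hjk
      (hb j hj hjk).1 (hb j hj hjk).2.1 (hb j hj hjk).2.2
      (sdiff_subset.trans (filter_subset _ _)) sdiff_disjoint
  refine ⟨⟨col, fun S => if #S ≤ 1 then 0 else χ #S S, fun S hS => if_pos hS⟩, rfl, hcol,
    fun j hj hjk => (hχ j hj hjk).congr hP hj (by lia) fun S hS => ?_⟩
  have hSj : #S = j := by
    obtain hS | hS := mem_union.1 hS
    · exact (PartFam.mem_cross.1 hS).1.2
    · exact (mem_rainbow.1 (mem_sdiff.1 hS).1).1.2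
  simp only [hSj]
  exact if_neg (by lia)

namespace IsEvenRefinement

theorem cross_subset_rainbow (h : C.IsEvenRefinement k b δ) :
    P.cross j ⊆ rainbow P.gnd C.col j := fun S hS => by
  rw [PartFam.mem_cross] at hS
  exact mem_rainbow.2 ⟨hS.1, fun u hu v hv huv =>
    hS.2 hu hv (h.vClass_eq u (hS.1.1 hu) v (hS.1.1 hv) huv)⟩

theorem mem_cross_of_image_col_eq (h : C.IsEvenRefinement k b δ)
    (hS : S ∈ rainbow P.gnd C.col j) (hT : T ∈ P.cross j)
    (hST : S.image C.col = T.image C.col) : S ∈ P.cross j := by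
  rw [mem_rainbow] at hS
  rw [PartFam.mem_cross] at hT ⊢
  have hclass : ∀ u ∈ S, ∃ u' ∈ T, C.col u' = C.col u ∧ P.vClass u' = P.vClass u := by
    intro u hu
    obtain ⟨u', hu', huu'⟩ := mem_image.1 (hST ▸ mem_image_of_mem C.col hu)
    exact ⟨u', hu', huu', h.vClass_eq u' (hT.1.1 hu') u (hS.1.1 hu) huu'⟩
  refine ⟨hS.1, fun u hu v hv huv => hS.2 hu hv ?_⟩
  obtain ⟨u', hu', hcolu, hu⟩ := hclass u hu
  obtain ⟨v', hv', hcolv, hv⟩ := hclass v hv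
  rw [← hcolu, ← hcolv, hT.2 hu' hv' (hu.trans (huv.trans hv.symm))]

theorem polyCliques_subset_of_part_subset (h : C.IsEvenRefinement k b δ) (hP : P.IsFamily k a)
    (hj : 2 ≤ j) (hjk : j ≤ k)
    (hpart : ∀ T ∈ P.cross (j - 1), C.family.part (j - 1) T ⊆ P.part (j - 1) T)
    (hJ : J ∈ P.cross j) : C.polyCliques J ⊆ P.polyCliques j J := fun S hS => by
  obtain ⟨hSr, hSp⟩ := mem_cliqueSets.1
    (mem_cliqueSets_of_mem_polyCliques hj (h.cross_subset_rainbow hJ) hS)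
  rw [hP.polyCliques_eq hj hjk hJ, mem_cliqueSets]
  refine ⟨h.mem_cross_of_image_col_eq hSr hJ (mem_agreeing.1 hS).2.1, fun T hT => ?_⟩
  obtain ⟨T', hT', hTT'⟩ := PartFam.mem_polyad.1 (hSp T hT)
  exact PartFam.mem_polyad.2
    ⟨T', hT', hpart T' (PartFam.mem_cross_of_mem_powersetCard hJ hT') hTT'⟩

theorem part_family_subset (h : C.IsEvenRefinement k b δ) (hP : P.IsFamily k a) (hi : 1 ≤ i)
    (hik : i ≤ k - 1) (hT : T ∈ P.cross i) : C.family.part i T ⊆ P.part i T := by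
  induction i, hi using Nat.le_induction generalizing T with
  | base =>
    obtain ⟨v, rfl⟩ := card_eq_one.1 (PartFam.mem_cross.1 hT).1.2
    intro S hS
    simp only [PartFam.part_one, sup_singleton, mem_sing] at hS ⊢
    obtain ⟨u, hu, rfl⟩ := hS
    obtain ⟨hu, huv⟩ := mem_filter.1 hu
    have hv := singleton_subset_iff.1 (PartFam.mem_cross.1 hT).1.1
    exact ⟨u, h.vClass_eq u hu v hv huv ▸ hP.1 u hu, rfl⟩
  | succ i hi ih =>
    intro S hS
    rw [PartFam.part_of_two_le (by lia), cls_family, mem_filter] at hS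
    have hSp := h.polyCliques_subset_of_part_subset (j := i + 1) hP (by lia) (by lia)
      (fun T hT => ih (by lia) hT) hT hS.1
    rw [PartFam.part_of_two_le (by lia),
      ← (h.isEvenLabelling (i + 1) (by lia) hik).cls_eq T hT S hSp hS.2]
    exact hP.mem_cls_self (by lia) hik (hP.polyCliques_subset_cross (by lia) (by lia) hT hSp)

theorem polyCliques_eq_of_mem_cross (h : C.IsEvenRefinement k b δ) (hP : P.IsFamily k a)
    (hj : 2 ≤ j) (hjk : j ≤ k) (hJ : J ∈ P.cross j) :
    C.polyCliques J = cliqueSets (P.polyCliques j J) (j - 1) (C.family.polyad (j - 1) J) := by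
  have hJr := h.cross_subset_rainbow hJ
  refine Subset.antisymm (fun S hS => mem_cliqueSets.2 ⟨?_, ?_⟩) fun S hS => ?_
  · exact h.polyCliques_subset_of_part_subset hP hj hjk
      (fun T hT => h.part_family_subset hP (by lia) (by lia) hT) hJ hS
  · exact (mem_cliqueSets.1 (mem_cliqueSets_of_mem_polyCliques hj hJr hS)).2
  · exact mem_polyCliques_of_mem_cliqueSets hj hJr (cliqueSets_mono_left
      ((hP.polyCliques_subset_cross hj hjk hJ).trans h.cross_subset_rainbow) hS)

theorem polyCliques_eq_of_notMem_cross (h : C.IsEvenRefinement k b δ) (hj : 2 ≤ j)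
    (hJ : J ∈ rainbow P.gnd C.col j) (hJP : J ∉ P.cross j) :
    C.polyCliques J = cliqueSets (rainbow P.gnd C.col j \ P.cross j) (j - 1)
      (C.family.polyad (j - 1) J) := by
  refine Subset.antisymm (fun S hS => ?_) fun S hS =>
    mem_polyCliques_of_mem_cliqueSets hj hJ (cliqueSets_mono_left sdiff_subset hS)
  obtain ⟨hSr, hSp⟩ := mem_cliqueSets.1 (mem_cliqueSets_of_mem_polyCliques hj hJ hS)
  exact mem_cliqueSets.2 ⟨mem_sdiff.2 ⟨hSr, fun hSP =>
    hJP (h.mem_cross_of_image_col_eq hJ hSP (mem_agreeing.1 hS).2.1.symm)⟩, hSp⟩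

theorem isBalanced (h : C.IsEvenRefinement k b δ) (hP : P.IsFamily k a) : C.IsBalanced k b δ := by
  intro j hj hjk J hJ
  have hlab := h.isEvenLabelling j hj hjk
  by_cases hJP : J ∈ P.cross j
  · refine ⟨hlab.lt J (mem_union_left _ hJP), fun ℓ hℓ => ?_⟩
    rw [h.polyCliques_eq_of_mem_cross hP hj (by lia) hJP, cliqueSets, filter_comm]
    exact (hlab.isEvenPart_polyCliques J hJP ℓ hℓ).restrict _
  · refine ⟨hlab.lt J (mem_union_right _ (mem_sdiff.2 ⟨hJ, hJP⟩)), fun ℓ hℓ => ?_⟩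
    rw [h.polyCliques_eq_of_notMem_cross hj hJ hJP, cliqueSets, filter_comm]
    exact (hlab.isEvenPart ℓ hℓ).restrict _

theorem refinesAt (h : C.IsEvenRefinement k b δ) (hP : P.IsFamily k a) (hj : 1 ≤ j)
    (hjk : j ≤ k - 1) : RefinesAt C.family P j := by
  rw [RefinesAt]
  split_ifs with hj1
  · intro v hv u hu
    obtain ⟨hu, huv⟩ := mem_filter.1 hu
    exact h.vClass_eq u hu v hv huv ▸ hP.1 u hu
  · intro I hI
    have hpart : C.family.part j I = C.family.cls j I := PartFam.part_of_two_le (by lia)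
    by_cases hIP : I ∈ P.cross j
    · refine Or.inl ⟨I, hIP, ?_⟩
      rw [← hpart, ← PartFam.part_of_two_le (by lia)]
      exact h.part_family_subset hP hj hjk hIP
    · refine Or.inr fun S hS hSP => hIP ?_
      rw [cross_family] at hI
      exact h.mem_cross_of_image_col_eq hI hSP (mem_agreeing.1 hS).2.1.symm

end IsEvenRefinement

end LabelledColoring

end RefiningLabels

section RegularRefinements

/-- A lower bound for the density of the clique sets of the polyads of `j`-sets, `j ≤ k`, in a
regular family with at most `t` classes inside each polyad. -/
noncomputable def cliqueDensity (k t : ℕ) : ℝ := (1 / (2 * (t : ℝ))) ^ k / (t : ℝ) ^ 2 ^ k / 2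

theorem cliqueDensity_pos {t : ℕ} (k : ℕ) (ht : 0 < t) : 0 < cliqueDensity k t := by
  rw [cliqueDensity]
  positivity

theorem cliqueDensity_le_one {t : ℕ} (k : ℕ) (ht : 0 < t) : cliqueDensity k t ≤ 1 := by
  have ht' : (1 : ℝ) ≤ t := by exact_mod_cast ht
  have h1 : (1 / (2 * (t : ℝ))) ^ k ≤ 1 :=
    pow_le_one₀ (by positivity) ((div_le_one (by positivity)).2 (by linarith))
  have h2 : (1 / (2 * (t : ℝ))) ^ k / (t : ℝ) ^ 2 ^ k ≤ 1 :=
    div_le_one_of_le₀ (h1.trans (one_le_pow₀ ht')) (by positivity)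
  rw [cliqueDensity]
  linarith

theorem two_mul_cliqueDensity_mul_pow_le {k t j : ℕ} {n q : ℝ} (ht : 0 < t) (hn : 0 ≤ n)
    (hq : n / (2 * t) ≤ q) (hjk : j ≤ k) :
    2 * cliqueDensity k t * n ^ j ≤ q ^ j / (t : ℝ) ^ 2 ^ j := by
  have ht' : (1 : ℝ) ≤ t := by exact_mod_cast ht
  calc 2 * cliqueDensity k t * n ^ j
      = n ^ j * (1 / (2 * (t : ℝ))) ^ k / (t : ℝ) ^ 2 ^ k := by rw [cliqueDensity]; ring
    _ ≤ n ^ j * (1 / (2 * (t : ℝ))) ^ j / (t : ℝ) ^ 2 ^ j := by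
        gcongr ?_ * ?_ / ?_
        · exact pow_le_pow_of_le_one (by positivity)
            ((div_le_one (by positivity)).2 (by linarith)) hjk
        · exact pow_le_pow_right₀ ht' (Nat.pow_le_pow_right (by norm_num) hjk)
    _ = (n / (2 * t)) ^ j / (t : ℝ) ^ 2 ^ j := by rw [← mul_pow, mul_one_div]
    _ ≤ q ^ j / (t : ℝ) ^ 2 ^ j := by gcongr

theorem div_two_mul_le_natDiv {n m t : ℕ} (hm : 0 < m) (hmt : m ≤ t) (hn : t ≤ n) :
    (n : ℝ) / (2 * t) ≤ (n / m : ℕ) := by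
  have ht : (0 : ℝ) < t := by exact_mod_cast hm.trans_le hmt
  have h1 : n < m * (n / m + 1) := Nat.lt_mul_div_succ n hm
  have h2 : 1 ≤ n / m := Nat.div_pos (hmt.trans hn) hm
  have h3 : n ≤ n / m * (2 * t) := by nlinarith
  rw [div_le_iff₀ (by positivity)]
  exact_mod_cast h3

theorem PartFam.IsFamily.exists_equitable_coloring {V : Type*} [DecidableEq V] {P : PartFam V}
    {k m : ℕ} {a : ℕ → ℕ} (hP : P.IsFamily k a)
    (hsize : ∀ v ∈ P.gnd, #(P.vClass v) = #P.gnd / a 1 ∨ #(P.vClass v) = #P.gnd / a 1 + 1)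
    (ham : a 1 ∣ m) (hm : 0 < m) :
    ∃ f : V → ℕ, IsEquitableColoring P.gnd f m ∧
      ∀ u ∈ P.gnd, ∀ v ∈ P.gnd, f u = f v → P.vClass u = P.vClass v := by
  refine exists_equitable_refinement ham hm hP.2.2.2.1 fun v hv => ?_
  have hclass : {u ∈ P.gnd | P.vClass u = P.vClass v} = P.vClass v := by
    ext u
    rw [mem_filter]
    exact ⟨fun ⟨hu, huv⟩ => (hP.vClass_eq_iff hu hv).1 huv, fun hu =>
      ⟨hP.2.1 v hv hu, (hP.vClass_eq_iff (hP.2.1 v hv hu) hv).2 hu⟩⟩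
  rw [hclass]
  exact hsize v hv

namespace LabelledColoring.IsBalanced

variable {V : Type*} [DecidableEq V] {W J : Finset V} {C : LabelledColoring W} {j k t : ℕ}
  {b : ℕ → ℕ} {δ ε : ℝ}

theorem cliqueDensity_mul_pow_le_card_polyCliques (hC : C.IsBalanced k b δ) (hδ : 0 ≤ δ)
    (hcol : IsEquitableColoring W C.col (b 1)) (hb : ∀ j, 1 ≤ j → j ≤ k - 1 → b j ≤ t)
    (hk : 2 ≤ k) (hb1 : 0 < b 1) (ht : t ≤ #W) (hδk : 2 ^ k * δ ≤ cliqueDensity k t) (hjk : j ≤ k)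
    (hJ : J ∈ rainbow W C.col j) :
    cliqueDensity k t * (#W : ℝ) ^ j ≤ #(C.polyCliques J) := by
  have hb1t : b 1 ≤ t := hb 1 le_rfl (by lia)
  have ht0 : 0 < t := hb1.trans_le hb1t
  have hcard := hC.le_card_polyCliques hδ ht0 (fun i hi => hb i (by lia)) hjk hJ fun v hv =>
    hcol.div_le_card (hcol.lt v ((mem_rainbow.1 hJ).1.1 hv))
  have hmain := two_mul_cliqueDensity_mul_pow_le ht0 (Nat.cast_nonneg #W)
    (div_two_mul_le_natDiv hb1 hb1t ht) hjk
  have herror : 2 ^ j * (δ * (#W : ℝ) ^ j) ≤ cliqueDensity k t * (#W : ℝ) ^ j := calc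
    2 ^ j * (δ * (#W : ℝ) ^ j) ≤ 2 ^ k * (δ * (#W : ℝ) ^ j) := by gcongr; norm_num
    _ = 2 ^ k * δ * (#W : ℝ) ^ j := (mul_assoc _ _ _).symm
    _ ≤ cliqueDensity k t * (#W : ℝ) ^ j := by gcongr
  linarith

theorem image_lab_polyCliques (hC : C.IsBalanced k b δ) (hj : 2 ≤ j) (hjk : j ≤ k - 1)
    (hJ : J ∈ rainbow W C.col j) (hlarge : b j * (δ * (#W : ℝ) ^ j) < #(C.polyCliques J)) :
    (C.polyCliques J).image C.lab = range (b j) := by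
  refine (image_subset_iff.2 fun I hI => mem_range.2 ?_).antisymm fun ℓ hℓ => ?_
  · have hI' := (mem_agreeing.1 hI).1
    rw [(mem_rainbow.1 hJ).1.2] at hI'
    exact (hC j hj hjk I hI').1
  · have hℓ := mem_range.1 hℓ
    have hdist := ((hC j hj hjk J hJ).2 ℓ hℓ).abs_card_sub_le (filter_subset _ _)
    have hb : (0 : ℝ) < b j := by exact_mod_cast Nat.zero_lt_of_lt hℓ
    have hdiv : δ * (#W : ℝ) ^ j < #(C.polyCliques J) / b j := (lt_div_iff₀' hb).2 hlarge
    have hpos : (0 : ℝ) < #{S ∈ C.polyCliques J | C.lab S = ℓ} := by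
      linarith [(abs_le.1 hdist).1]
    obtain ⟨S, hS⟩ := card_pos.1 (Nat.cast_pos.1 hpos)
    exact mem_image.2 ⟨S, mem_filter.1 hS⟩

theorem isFamily_family (hC : C.IsBalanced k b δ) (hk : k ≤ b 1) (hcol : #(W.image C.col) = b 1)
    (hlarge : ∀ j, 2 ≤ j → j ≤ k - 1 → ∀ J ∈ rainbow W C.col j,
      b j * (δ * (#W : ℝ) ^ j) < #(C.polyCliques J)) :
    C.family.IsFamily k b :=
  C.isFamily_family hk hcol fun j hj hjk J hJ => by
    rw [hC.image_lab_polyCliques hj hjk hJ (hlarge j hj hjk J hJ), card_range]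

theorem polyadReg_family (hC : C.IsBalanced k b δ) (hF : C.family.IsFamily k b) (hε : 0 ≤ ε)
    (hlarge : ∀ j, 2 ≤ j → j ≤ k - 1 → ∀ J ∈ rainbow W C.col j,
      δ * (#W : ℝ) ^ j ≤ ε * (ε * #(C.polyCliques J))) :
    C.family.PolyadReg k b ε := by
  refine hF.polyadReg_iff.2 fun j hj hjk J hJ => ?_
  rw [cross_family] at hJ
  rw [cls_family, polyCliques_family hj hJ]
  obtain ⟨hlt, heven⟩ := hC j hj hjk J hJ
  exact (heven _ hlt).isRegularPart hε (hlarge j hj hjk J hJ)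

theorem isFamily_and_polyadReg_family (hC : C.IsBalanced k b δ)
    (hcol : IsEquitableColoring W C.col (b 1)) (hb : ∀ j, 1 ≤ j → j ≤ k - 1 → b j ≤ t)
    (hk : 2 ≤ k) (hkb : k ≤ b 1) (ht : t ≤ #W) (hδ : 0 ≤ δ) (hε : 0 ≤ ε)
    (hδk : 2 ^ k * t * δ < cliqueDensity k t) (hδε : δ ≤ ε * (ε * cliqueDensity k t)) :
    C.family.IsFamily k b ∧ C.family.PolyadReg k b ε := by
  have hb1t : b 1 ≤ t := hb 1 le_rfl (by lia)
  have ht1 : (1 : ℝ) ≤ t := by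
    have : 1 ≤ t := by lia
    exact_mod_cast this
  have hW : (0 : ℝ) < #W := by
    have : 0 < #W := by lia
    exact_mod_cast this
  have hδk' : 2 ^ k * δ ≤ cliqueDensity k t := calc
    2 ^ k * δ ≤ 2 ^ k * δ * t := le_mul_of_one_le_right (by positivity) ht1
    _ = 2 ^ k * t * δ := by ring
    _ ≤ cliqueDensity k t := hδk.le
  have hcard : ∀ j, 2 ≤ j → j ≤ k - 1 → ∀ J ∈ rainbow W C.col j,
      cliqueDensity k t * (#W : ℝ) ^ j ≤ #(C.polyCliques J) := fun j _ hjk J hJ =>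
    hC.cliqueDensity_mul_pow_le_card_polyCliques hδ hcol hb hk (by lia) ht hδk' (by lia) hJ
  have hfam : C.family.IsFamily k b := by
    refine hC.isFamily_family hkb (hcol.card_image (hb1t.trans ht)) fun j hj hjk J hJ =>
      lt_of_lt_of_le ?_ (hcard j hj hjk J hJ)
    calc b j * (δ * (#W : ℝ) ^ j) ≤ t * (δ * (#W : ℝ) ^ j) := by gcongr; exact hb j (by lia) hjk
      _ ≤ 2 ^ k * (t * (δ * (#W : ℝ) ^ j)) :=
        le_mul_of_one_le_left (by positivity) (one_le_pow₀ one_le_two)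
      _ = 2 ^ k * t * δ * (#W : ℝ) ^ j := by ring
      _ < cliqueDensity k t * (#W : ℝ) ^ j := by gcongr
  refine ⟨hfam, hC.polyadReg_family hfam hε fun j hj hjk J hJ => ?_⟩
  calc δ * (#W : ℝ) ^ j ≤ ε * (ε * cliqueDensity k t) * (#W : ℝ) ^ j := by gcongr
    _ = ε * (ε * (cliqueDensity k t * (#W : ℝ) ^ j)) := by ring
    _ ≤ ε * (ε * #(C.polyCliques J)) := by gcongr; exact hcard j hj hjk J hJ

end LabelledColoring.IsBalanced

theorem bounds_of_le_div_pow_three {c M ε : ℝ} (hc0 : 0 < c) (hc1 : c ≤ 1) (hM : 1 ≤ M)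
    (hε0 : 0 < ε) (hε : ε ≤ (c / (4 * M)) ^ 3) :
    ε ≤ 1 ∧ M * (2 * ε) < c ∧ 2 * ε ≤ ε ^ ((1 : ℝ) / 3) * (ε ^ ((1 : ℝ) / 3) * c) := by
  set x := ε ^ ((1 : ℝ) / 3) with hx
  have hx0 : 0 < x := Real.rpow_pos_of_pos hε0 _
  have hx3 : x ^ 3 = ε := by
    rw [hx, ← Real.rpow_natCast, ← Real.rpow_mul hε0.le]
    norm_num
  have hxM : x ≤ c / (4 * M) :=
    le_of_pow_le_pow_left₀ three_ne_zero (by positivity) (hx3.trans_le hε)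
  rw [le_div_iff₀ (by positivity)] at hxM
  have hxc : 4 * x ≤ c := by nlinarith
  have hxε : ε ≤ x := hx3 ▸ pow_le_of_le_one hx0.le (by linarith) three_ne_zero
  refine ⟨by linarith, by nlinarith, ?_⟩
  calc 2 * ε = x * (x * (2 * x)) := by rw [← hx3]; ring
    _ ≤ x * (x * c) := by gcongr; linarith

end RegularRefinements

/-- Refining an equitable family of partitions into one with class vector `b`. -/
theorem family_refinement :
    ∀ k t : ℕ, 2 ≤ k → 2 ≤ t → ∃ ε₀ : ℝ, 0 < ε₀ ∧ ∀ ε : ℝ, 0 < ε → ε ≤ ε₀ →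
    ∃ n₀ : ℕ, ∀ (V : Type) [DecidableEq V], ∀ (W : Finset V) (n : ℕ),
    W.card = n → n₀ ≤ n →
    ∀ η : ℝ, 0 < η → η < 1 →
    ∀ (a b : ℕ → ℕ) (P : PartFam V), P.gnd = W →
    P.IsFamily k a → P.IsEquitableE k a η ε →
    (∀ i, 1 ≤ i → i ≤ k - 1 → 1 ≤ b i ∧ b i ≤ t) →
    (∀ i, 1 ≤ i → i ≤ k - 1 → a i ∣ b i) →
    ∃ Q : PartFam V, Q.gnd = W ∧ Q.IsFamily k b ∧
      Q.IsEquitableE k b η (ε ^ ((1 : ℝ)/3)) ∧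
      ∀ j, 1 ≤ j → j ≤ k - 1 → RefinesAt Q P j := by
  intro k t hk ht
  have hc := cliqueDensity_pos k (t := t) (by lia)
  have ht1 : (1 : ℝ) ≤ t := by exact_mod_cast (by lia : 1 ≤ t)
  refine ⟨(cliqueDensity k t / (4 * (2 ^ k * t))) ^ 3, by positivity, fun ε hε0 hε => ?_⟩
  obtain ⟨hε1, hεc, hε3⟩ := bounds_of_le_div_pow_three hc (cliqueDensity_le_one k (by lia))
    (one_le_mul_of_one_le_of_one_le (one_le_pow₀ one_le_two) ht1) hε0 hε
  refine ⟨max ⌈(2 * t + 1) * 4 / ε ^ 2⌉₊ t, ?_⟩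
  rintro V _ W n rfl hn η hη - a b P rfl hP ⟨ha, hsize, hreg⟩ hb hab
  obtain ⟨hb1, -⟩ := hb 1 le_rfl (by lia)
  have hab1 : a 1 ≤ b 1 := Nat.le_of_dvd hb1 (hab 1 le_rfl (by lia))
  obtain ⟨col, hcol, hPcol⟩ := hP.exists_equitable_coloring hsize (hab 1 le_rfl (by lia)) hb1
  obtain ⟨C, rfl, hC⟩ := LabelledColoring.exists_isEvenRefinement hP hreg hε0 hε1 hPcol
    fun j hj hjk => ⟨(hb j (by lia) hjk).1, hab j (by lia) hjk, calc
      (2 * b j + 1) * 4 / ε ^ 2 ≤ (2 * t + 1) * 4 / ε ^ 2 := by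
        gcongr; exact (hb j (by lia) hjk).2
      _ ≤ (#P.gnd : ℝ) := Nat.ceil_le.1 ((le_max_left _ _).trans hn)⟩
  obtain ⟨hfam, hQreg⟩ := (hC.isBalanced hP).isFamily_and_polyadReg_family hcol
    (fun j hj hjk => (hb j hj hjk).2) hk (hP.2.2.2.2.1.trans hab1) ((le_max_right _ _).trans hn)
    (by positivity) (by positivity) hεc hε3
  exact ⟨C.family, rfl, hfam, ⟨ha.trans (by gcongr), fun v hv => hcol.card_eq _ (hcol.lt v hv),
    hQreg⟩, fun j hj hjk => hC.refinesAt hP hj hjk⟩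

end HypReg
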